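/- arXiv:1808.10376 — 4 statements merged into one kernel-verified Lean document; each statement's English description precedes it below -/
import Mathlib

section
/- Let p, q, l be nonnegative integers with q ≥ p. Then Σ_{m=0}^{p} (−1)^m (q−m+l)! / ( m! (p−m)! (q−m)! ) equals 0 if l < p, and equals l! (l+q−p)! / ( q! p! (l−p)! ) if l ≥ p. -/
/-!
Up to the factor `l! / p!`, the sum is the `p`-th backward difference of `x ↦ x.choose l` at
`x = q + l`, namely `∑ (-1)^m (p.choose m) ((q - m + l).choose l)`. Each difference lowers the
lower index by Pascal's rule, so with `q = p + d` the value is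
`(l + d).choose (l - p)` for `p ≤ l` and `0` for `l < p`; in both cases this is
`(l + d).choose (p + d)`.
This evaluation is `sum_neg_one_pow_choose_mul_choose`.
-/

open Nat

/-- Iterated backward difference of a binomial coefficient. Writing the upper argument
as `p - m + d + l` makes the summand a function of `m` and `p - m`, so that
`Finset.sum_choose_succ_mul` applies in the induction on `p`. -/
lemma sum_neg_one_pow_choose_mul_choose (p d l : ℕ) :
    ∑ m ∈ Finset.range (p + 1),
        (p.choose m : ℚ) * ((-1) ^ m * ((p - m + d + l).choose l : ℚ)) =
      ((l + d).choose (p + d) : ℚ) := by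
  induction p generalizing d with
  | zero =>
    simp only [zero_add, Finset.sum_range_one, Nat.choose_self, pow_zero, Nat.cast_one, one_mul,
      Nat.sub_self]
    rw [add_comm d l, ← Nat.choose_symm_add]
  | succ p ih =>
    have h := Finset.sum_choose_succ_mul
      (fun i j => (-1 : ℚ) ^ i * ((j + d + l).choose l : ℚ)) p
    have h1 : ∑ m ∈ Finset.range (p + 1),
        (p.choose m : ℚ) * ((-1) ^ m * ((p + 1 - m + d + l).choose l : ℚ)) =
        ((l + (d + 1)).choose (p + (d + 1)) : ℚ) := by
      rw [← ih (d + 1)]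
      refine Finset.sum_congr rfl fun m hm => ?_
      have hm' := Finset.mem_range.mp hm
      rw [show p + 1 - m + d + l = p - m + (d + 1) + l by omega]
    have h2 : ∑ m ∈ Finset.range (p + 1),
        (p.choose m : ℚ) * ((-1) ^ (m + 1) * ((p - m + d + l).choose l : ℚ)) =
        -((l + d).choose (p + d) : ℚ) := by
      rw [← ih d, ← Finset.sum_neg_distrib]
      exact Finset.sum_congr rfl fun m _ => by ring
    have h3 : ((l + (d + 1)).choose (p + (d + 1)) : ℚ) =
        ((l + d).choose (p + d) : ℚ) + ((l + d).choose (p + 1 + d) : ℚ) := by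
      rw [← add_assoc l, ← add_assoc p, Nat.choose_succ_succ', add_right_comm p d 1]
      push_cast
      rfl
    rw [h1, h2, h3] at h
    linarith

theorem alternating_factorial_sum (p q l : ℕ) (hpq : p ≤ q) :
    ∑ m ∈ Finset.range (p + 1),
        (-1 : ℚ) ^ m * ((q - m + l).factorial : ℚ) /
          ((m.factorial : ℚ) * ((p - m).factorial : ℚ) * ((q - m).factorial : ℚ)) =
      if l < p then 0
      else ((l.factorial : ℚ) * ((l + q - p).factorial : ℚ)) /
        ((q.factorial : ℚ) * (p.factorial : ℚ) * ((l - p).factorial : ℚ)) := by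
  obtain ⟨d, rfl⟩ := Nat.exists_eq_add_of_le hpq
  have hf : ∀ n : ℕ, (n.factorial : ℚ) ≠ 0 := fun n => by exact_mod_cast n.factorial_ne_zero
  have key : ∑ m ∈ Finset.range (p + 1),
      (-1 : ℚ) ^ m * ((p + d - m + l).factorial : ℚ) /
        ((m.factorial : ℚ) * ((p - m).factorial : ℚ) * ((p + d - m).factorial : ℚ)) =
      (l.factorial : ℚ) / p.factorial * ((l + d).choose (p + d) : ℚ) := by
    rw [← sum_neg_one_pow_choose_mul_choose, Finset.mul_sum]
    refine Finset.sum_congr rfl fun m hm => ?_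
    have hm' : m ≤ p := Nat.lt_succ_iff.mp (Finset.mem_range.mp hm)
    rw [show p + d - m = p - m + d by omega, Nat.cast_choose ℚ hm',
      Nat.cast_choose ℚ (Nat.le_add_left l (p - m + d)), Nat.add_sub_cancel]
    field_simp [hf]
  rw [key]
  split_ifs with h
  · rw [Nat.choose_eq_zero_of_lt (by omega)]
    simp
  · rw [Nat.cast_choose ℚ (by omega : p + d ≤ l + d), show l + d - (p + d) = l - p by omega,
      show l + (p + d) - p = l + d by omega]
    field_simp [hf]
end

section
/- Let f, g : ℂ^n → ℂ be bounded measurable functions and t > 0. Then for every z ∈ ℂ^n, the series Σ_{α ∈ ℕ_0^n} ((−t)^{|α|}/α!) (∂^α f^{(t)})(z) (∂̄^α g^{(t)})(z) converges absolutely and its sum equals S_t(f,g)(z) = π^{−2n} ∫_{ℂ^n} ∫_{ℂ^n} f(√t v + z) g(√t w + z) e^{−⟨w,v⟩ − |v|² − |w|²} dv dw. -/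
/-!
Differentiating the Gaussian kernel under the integral sign gives
`∂^α f^{(t)}(z) = π⁻ⁿ t^{-|α|/2} ∫ f(√t v + z) v̄^α e^{-|v|²} dv` (`wD_heat`), and, by complex
conjugation, `∂̄^α g^{(t)}(z) = π⁻ⁿ t^{-|α|/2} ∫ g(√t w + z) w^α e^{-|w|²} dw` (`wDbar_heat`).
Multiplying by `(-t)^{|α|} / α!`, the `α`-th term of the series becomes the double integral of
`f(√t v + z) g(√t w + z) e^{-|v|² - |w|²} ∏ᵢ (-wᵢ v̄ᵢ)^{αᵢ} / αᵢ!`, and the pointwise sum of these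
integrands over `α` is the integrand of `S_t(f,g)(z)` by the exponential series. Since
`exp (∑ |wᵢ| |vᵢ|) ≤ exp (|v|²/2 + |w|²/2)`, dominated convergence allows summing under the
integral (`hasSum_integral_sharpTerm`).

For the derivative formula, the heat transform is written as a convolution of `f` with the Gaussian,
so that only the smooth kernel depends on `z`. The kernels `∏ᵢ (w̄ᵢ / t)^βᵢ e^{-|w|²/t}` are stable
under `∂ⱼ`, which raises `βⱼ` by one (`wDz_gaussConv`).
-/

open MeasureTheory Filter Topology

noncomputable section

/-- Squared Euclidean norm `|z|² = ∑ⱼ |zⱼ|²` on `ℂⁿ`. -/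
def cnormSq (n : ℕ) (z : Fin n → ℂ) : ℝ := ∑ j, Complex.normSq (z j)

/-- Wirtinger derivative `∂ⱼ = (∂/∂xⱼ - i ∂/∂yⱼ)/2` (here `zⱼ = xⱼ + i yⱼ`). -/
def wDz (n : ℕ) (j : Fin n) (f : (Fin n → ℂ) → ℂ) (z : Fin n → ℂ) : ℂ :=
  (lineDeriv ℝ f z (Pi.single j 1) - Complex.I * lineDeriv ℝ f z (Pi.single j Complex.I)) / 2

/-- Wirtinger derivative `∂̄ⱼ = (∂/∂xⱼ + i ∂/∂yⱼ)/2`. -/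
def wDzbar (n : ℕ) (j : Fin n) (f : (Fin n → ℂ) → ℂ) (z : Fin n → ℂ) : ℂ :=
  (lineDeriv ℝ f z (Pi.single j 1) + Complex.I * lineDeriv ℝ f z (Pi.single j Complex.I)) / 2

/-- Iterated Wirtinger derivative `∂^α`. -/
def wD (n : ℕ) (α : Fin n → ℕ) (f : (Fin n → ℂ) → ℂ) : (Fin n → ℂ) → ℂ :=
  (List.ofFn fun j => (wDz n j)^[α j]).foldr (· ∘ ·) id f

/-- Iterated Wirtinger derivative `∂̄^α`. -/
def wDbar (n : ℕ) (α : Fin n → ℕ) (f : (Fin n → ℂ) → ℂ) : (Fin n → ℂ) → ℂ :=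
  (List.ofFn fun j => (wDzbar n j)^[α j]).foldr (· ∘ ·) id f

/-- `|α| = α₁ + … + αₙ`. -/
def msum (n : ℕ) (α : Fin n → ℕ) : ℕ := ∑ j, α j

/-- `α! = α₁! ⋯ αₙ!`. -/
def mfact (n : ℕ) (α : Fin n → ℕ) : ℕ := ∏ j, (α j).factorial

/-- The (finite) set of all multi-indices `α ∈ ℕ₀ⁿ` with `|α| ≤ k`. -/
def mIdxLe (n k : ℕ) : Finset (Fin n → ℕ) :=
  (Fintype.piFinset fun _ : Fin n => Finset.range (k + 1)).filter fun α => msum n α ≤ k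

/-- `f ∈ C^m_b(ℂⁿ)`: `m`-times continuously differentiable with all partial derivatives up to
order `m` bounded. -/
def ContDiffBdd (n m : ℕ) (f : (Fin n → ℂ) → ℂ) : Prop :=
  ContDiff ℝ m f ∧ ∀ i ≤ m, ∃ C, ∀ z, ‖iteratedFDeriv ℝ i f z‖ ≤ C

/-- The heat (Berezin) transform `f^{(t)}(z) = π⁻ⁿ ∫ f(√t w + z) e^{-|w|²} dv(w)`. -/
def heat (n : ℕ) (t : ℝ) (f : (Fin n → ℂ) → ℂ) (z : Fin n → ℂ) : ℂ :=
  (Real.pi ^ n)⁻¹ • ∫ w : Fin n → ℂ, Real.exp (-(cnormSq n w)) • f (Real.sqrt t • w + z)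

/-- `S_t(f,g)(z) = π^{-2n} ∬ f(√t v + z) g(√t w + z) e^{-⟨w,v⟩ - |v|² - |w|²} dv dw`. -/
def sharpInt (n : ℕ) (t : ℝ) (f g : (Fin n → ℂ) → ℂ) (z : Fin n → ℂ) : ℂ :=
  (Real.pi ^ (2 * n))⁻¹ • ∫ v : Fin n → ℂ, ∫ w : Fin n → ℂ,
    f (Real.sqrt t • v + z) * g (Real.sqrt t • w + z) *
      Complex.exp (-(∑ j, w j * (starRingEnd ℂ) (v j)) - (cnormSq n v : ℂ) - (cnormSq n w : ℂ))

/-! ### The Gaussian kernels -/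

/-- The kernel `∏ᵢ (w̄ᵢ / t)^βᵢ · exp (-|w|² / t)`. Convolving `f` with it gives, up to a constant,
the derivative `∂^β` of the heat transform of `f`. -/
def gaussKer (n : ℕ) (t : ℝ) (β : Fin n → ℕ) (w : Fin n → ℂ) : ℂ :=
  (∏ i, ((starRingEnd ℂ) (w i) / t) ^ β i) * ((Real.exp (-(cnormSq n w) / t) : ℝ) : ℂ)

/-- The derivative of `s ↦ gaussKer n t β (w - s • (Pi.single j a : Fin n → ℂ))` at `s = 0`. For `β j = 0` the
truncated difference `β - Pi.single j 1` is harmless, since its coefficient vanishes. -/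
def gaussKerDeriv (n : ℕ) (t : ℝ) (β : Fin n → ℕ) (j : Fin n) (a : ℂ) (w : Fin n → ℂ) : ℂ :=
  -((β j : ℂ) * (starRingEnd ℂ) a / t) * gaussKer n t (β - Pi.single j 1) w
    + ((2 * ((starRingEnd ℂ) (w j) * a).re / t : ℝ) : ℂ) * gaussKer n t β w

lemma cnormSq_nonneg (n : ℕ) (w : Fin n → ℂ) : 0 ≤ cnormSq n w :=
  Finset.sum_nonneg fun _ _ => Complex.normSq_nonneg _

lemma continuous_cnormSq (n : ℕ) : Continuous (cnormSq n) := by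
  unfold cnormSq
  exact continuous_finsetSum _ fun i _ => Complex.continuous_normSq.comp (continuous_apply i)

lemma continuous_gaussKer (n : ℕ) (t : ℝ) (β : Fin n → ℕ) : Continuous (gaussKer n t β) := by
  have := continuous_cnormSq n
  unfold gaussKer
  refine Continuous.mul (continuous_finsetProd _ fun i _ => ?_) ?_
  · exact ((Complex.continuous_conj.comp (continuous_apply i)).div_const _).pow _
  · exact Complex.continuous_ofReal.comp (Real.continuous_exp.comp (this.neg.div_const _))

lemma continuous_gaussKerDeriv (n : ℕ) (t : ℝ) (β : Fin n → ℕ) (j : Fin n) (a : ℂ) :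
    Continuous (gaussKerDeriv n t β j a) := by
  have h1 := continuous_gaussKer n t (β - Pi.single j 1)
  have h2 := continuous_gaussKer n t β
  unfold gaussKerDeriv
  refine (continuous_const.mul h1).add (Continuous.mul ?_ h2)
  refine Complex.continuous_ofReal.comp ((continuous_const.mul ?_).div_const _)
  exact Complex.continuous_re.comp
    ((Complex.continuous_conj.comp (continuous_apply j)).mul continuous_const)

lemma integrable_gauss (n : ℕ) {b : ℝ} (hb : 0 < b) :
    Integrable (fun w : Fin n → ℂ => Real.exp (-(b * cnormSq n w))) := by
  have h1 : Integrable (fun x : ℂ => Real.exp (-(b * Complex.normSq x))) := by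
    have h := (GaussianFourier.integrable_cexp_neg_mul_sq_norm_add (V := ℂ) (b := (b : ℂ))
      (by simpa using hb) 0 0).norm
    refine h.congr (Eventually.of_forall fun x => ?_)
    simp [Complex.norm_exp, Complex.normSq_eq_norm_sq, ← Complex.ofReal_pow,
      ← Complex.ofReal_mul]
  have h2 := Integrable.fintype_prod (ι := Fin n)
    (f := fun _ (x : ℂ) => Real.exp (-(b * Complex.normSq x)))
    (μ := fun _ => volume) (fun _ => h1)
  refine h2.congr (Eventually.of_forall fun x => ?_)
  simp [cnormSq, ← Real.exp_sum, Finset.mul_sum]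

/-- Half of the Gaussian decay absorbs any power: `yᵏ ≤ 1 + y²ᵏ`, and `(y²)ᵏ / k!` is dominated by
an exponential. -/
lemma pow_mul_gauss_le (k : ℕ) {t : ℝ} (ht : 0 < t) :
    ∃ M, 0 ≤ M ∧ ∀ x : ℂ, ‖(((starRingEnd ℂ) x / t) ^ k : ℂ)‖ * Real.exp (-(Complex.normSq x) / t)
      ≤ M * Real.exp (-(1 / (2 * t) * Complex.normSq x)) := by
  refine ⟨1 + k.factorial * (2 / t) ^ k, by positivity, fun x => ?_⟩
  set y := ‖x‖ / t with hy
  have hy0 : 0 ≤ y := by positivity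
  have hn : ‖(((starRingEnd ℂ) x / t) ^ k : ℂ)‖ = y ^ k := by
    simp [hy, abs_of_pos ht]
  set q := 1 / (2 * t) * Complex.normSq x with hq
  have hq0 : 0 ≤ q := mul_nonneg (by positivity) (Complex.normSq_nonneg _)
  have hyq : y ^ 2 = (2 / t) * q := by
    rw [hy, hq, Complex.normSq_eq_norm_sq]; field_simp
  have hexp : Real.exp (-(Complex.normSq x) / t) = Real.exp (-q) * Real.exp (-q) := by
    rw [← Real.exp_add]; congr 1; rw [hq]; field_simp; ring
  have h1 : y ^ k ≤ 1 + (y ^ 2) ^ k := by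
    rw [← pow_mul, mul_comm, pow_mul]
    nlinarith [sq_nonneg (y ^ k - 1)]
  have h2 : q ^ k ≤ k.factorial * Real.exp q := by
    have := Real.pow_div_factorial_le_exp (x := q) hq0 k
    rw [div_le_iff₀ (by positivity)] at this
    linarith
  have h3 : y ^ k ≤ (1 + k.factorial * (2 / t) ^ k) * Real.exp q := by
    rw [hyq, mul_pow] at h1
    have h4 : 1 ≤ Real.exp q := Real.one_le_exp hq0
    have h5 : (2 / t) ^ k * q ^ k ≤ (2 / t) ^ k * (k.factorial * Real.exp q) :=
      mul_le_mul_of_nonneg_left h2 (by positivity)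
    nlinarith
  rw [hn, hexp]
  have h6 : Real.exp q * Real.exp (-q) = 1 := by rw [← Real.exp_add]; simp
  calc y ^ k * (Real.exp (-q) * Real.exp (-q))
      ≤ ((1 + k.factorial * (2 / t) ^ k) * Real.exp q) * (Real.exp (-q) * Real.exp (-q)) := by
        gcongr
    _ = (1 + k.factorial * (2 / t) ^ k) * (Real.exp q * Real.exp (-q)) * Real.exp (-q) := by ring
    _ = _ := by rw [h6, mul_one]

lemma gaussKer_bound (n : ℕ) {t : ℝ} (ht : 0 < t) (β : Fin n → ℕ) :
    ∃ M, 0 ≤ M ∧ ∀ w, ‖gaussKer n t β w‖ ≤ M * Real.exp (-(1 / (2 * t) * cnormSq n w)) := by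
  choose M hM0 hM using fun i => pow_mul_gauss_le (β i) ht
  refine ⟨∏ i, M i, Finset.prod_nonneg fun i _ => hM0 i, fun w => ?_⟩
  have h1 : ‖gaussKer n t β w‖ = ∏ i, (‖(((starRingEnd ℂ) (w i) / t) ^ β i : ℂ)‖ *
      Real.exp (-(Complex.normSq (w i)) / t)) := by
    rw [gaussKer, norm_mul, norm_prod, Finset.prod_mul_distrib, ← Real.exp_sum,
      Complex.norm_real, Real.norm_of_nonneg (Real.exp_pos _).le, ← Finset.sum_div,
      Finset.sum_neg_distrib, cnormSq]
  have h2 : (∏ i, M i) * Real.exp (-(1 / (2 * t) * cnormSq n w)) =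
      ∏ i, (M i * Real.exp (-(1 / (2 * t) * Complex.normSq (w i)))) := by
    rw [Finset.prod_mul_distrib, ← Real.exp_sum, cnormSq, Finset.mul_sum, Finset.sum_neg_distrib]
  rw [h1, h2]
  exact Finset.prod_le_prod (fun i _ => by positivity) fun i _ => hM i (w i)

lemma gaussKer_add_single (n : ℕ) (t : ℝ) (β : Fin n → ℕ) (j : Fin n) (w : Fin n → ℂ) :
    gaussKer n t (β + Pi.single j 1) w = (starRingEnd ℂ) (w j) / t * gaussKer n t β w := by
  simp only [gaussKer, Pi.add_apply, pow_add, Finset.prod_mul_distrib]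
  have : ∏ i, ((starRingEnd ℂ) (w i) / (t : ℂ)) ^ (Pi.single j 1 : Fin n → ℕ) i
      = (starRingEnd ℂ) (w j) / t := by
    rw [Finset.prod_eq_single j] <;> simp +contextual
  rw [this]; ring

lemma gaussKerDeriv_bound (n : ℕ) {t : ℝ} (ht : 0 < t) (β : Fin n → ℕ) (j : Fin n) (a : ℂ) :
    ∃ M, 0 ≤ M ∧ ∀ w, ‖gaussKerDeriv n t β j a w‖
      ≤ M * Real.exp (-(1 / (2 * t) * cnormSq n w)) := by
  obtain ⟨M1, hM1, h1⟩ := gaussKer_bound n ht (β - Pi.single j 1)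
  obtain ⟨M2, hM2, h2⟩ := gaussKer_bound n ht (β + Pi.single j 1)
  refine ⟨‖(β j : ℂ) * (starRingEnd ℂ) a / t‖ * M1 + 2 * ‖a‖ * M2, by positivity, fun w => ?_⟩
  have h3 : ‖((2 * ((starRingEnd ℂ) (w j) * a).re / t : ℝ) : ℂ) * gaussKer n t β w‖
      ≤ 2 * ‖a‖ * ‖gaussKer n t (β + Pi.single j 1) w‖ := by
    rw [gaussKer_add_single, norm_mul, norm_mul, Complex.norm_real, norm_div, norm_div, norm_mul,
      Complex.norm_real, RCLike.norm_conj]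
    have := Complex.abs_re_le_norm ((starRingEnd ℂ) (w j) * a)
    rw [norm_mul, RCLike.norm_conj] at this
    have h4 : ‖(2 : ℝ)‖ * ‖((starRingEnd ℂ) (w j) * a).re‖ / ‖t‖ ≤ 2 * (‖w j‖ * ‖a‖) / ‖t‖ := by
      rw [Real.norm_ofNat, Real.norm_eq_abs (Complex.re _)]
      gcongr
    calc _ ≤ 2 * (‖w j‖ * ‖a‖) / ‖t‖ * ‖gaussKer n t β w‖ := by gcongr
      _ = _ := by ring
  calc ‖gaussKerDeriv n t β j a w‖
      ≤ ‖-((β j : ℂ) * (starRingEnd ℂ) a / t) * gaussKer n t (β - Pi.single j 1) w‖ +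
        ‖((2 * ((starRingEnd ℂ) (w j) * a).re / t : ℝ) : ℂ) * gaussKer n t β w‖ := norm_add_le _ _
    _ ≤ ‖(β j : ℂ) * (starRingEnd ℂ) a / t‖ * (M1 * Real.exp (-(1 / (2 * t) * cnormSq n w))) +
        2 * ‖a‖ * (M2 * Real.exp (-(1 / (2 * t) * cnormSq n w))) := by
        gcongr
        · rw [norm_mul, norm_neg]
          exact mul_le_mul_of_nonneg_left (h1 w) (norm_nonneg _)
        · exact h3.trans (mul_le_mul_of_nonneg_left (h2 w) (by positivity))
    _ = _ := by ring

lemma hasDerivAt_gaussKer (n : ℕ) (t : ℝ) (β : Fin n → ℕ) (j : Fin n) (a : ℂ)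
    (w : Fin n → ℂ) (s : ℝ) :
    HasDerivAt (fun s : ℝ => gaussKer n t β (w - s • (Pi.single j a : Fin n → ℂ)))
      (gaussKerDeriv n t β j a (w - s • (Pi.single j a : Fin n → ℂ))) s := by
  -- Only the `j`-th coordinate moves, so the remaining factors are constants `P` and `R`.
  have key : ∀ (γ : Fin n → ℕ), (∀ i, i ≠ j → γ i = β i) → ∀ s : ℝ,
      gaussKer n t γ (w - s • (Pi.single j a : Fin n → ℂ)) =
      (((starRingEnd ℂ) (w j) - s * (starRingEnd ℂ) a) / t) ^ γ j *
      (∏ i ∈ Finset.univ.erase j, ((starRingEnd ℂ) (w i) / t) ^ β i) *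
      ((Real.exp (-(((w j).re - s * a.re) ^ 2 + ((w j).im - s * a.im) ^ 2 +
        ∑ i ∈ Finset.univ.erase j, Complex.normSq (w i)) / t) : ℝ) : ℂ) := by
    intro γ hγ s
    rw [gaussKer, cnormSq, ← Finset.mul_prod_erase _ _ (Finset.mem_univ j),
      ← Finset.add_sum_erase _ _ (Finset.mem_univ j)]
    have e1 : ∏ i ∈ Finset.univ.erase j,
        ((starRingEnd ℂ) ((w - s • (Pi.single j a : Fin n → ℂ)) i) / (t : ℂ)) ^ γ i =
        ∏ i ∈ Finset.univ.erase j, ((starRingEnd ℂ) (w i) / (t : ℂ)) ^ β i := by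
      refine Finset.prod_congr rfl fun i hi => ?_
      have := Finset.ne_of_mem_erase hi
      simp [this, hγ i this]
    have e2 : ∑ i ∈ Finset.univ.erase j, Complex.normSq ((w - s • (Pi.single j a : Fin n → ℂ)) i) =
        ∑ i ∈ Finset.univ.erase j, Complex.normSq (w i) := by
      refine Finset.sum_congr rfl fun i hi => ?_
      have := Finset.ne_of_mem_erase hi
      simp [this]
    rw [e1, e2]
    simp [Complex.normSq_apply, pow_two]
  set P := ∏ i ∈ Finset.univ.erase j, ((starRingEnd ℂ) (w i) / (t : ℂ)) ^ β i
  set R := ∑ i ∈ Finset.univ.erase j, Complex.normSq (w i)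
  have hfun : (fun s : ℝ => gaussKer n t β (w - s • (Pi.single j a : Fin n → ℂ))) = fun s : ℝ => _ :=
    funext (key β fun _ _ => rfl)
  rw [hfun, gaussKerDeriv, key β (fun _ _ => rfl), key (β - Pi.single j 1) (by
    intro i hi; simp [hi])]
  have d1 : HasDerivAt (fun s : ℝ => ((starRingEnd ℂ) (w j) - s * (starRingEnd ℂ) a) / (t : ℂ))
      (-((starRingEnd ℂ) a) / t) s := by
    have : HasDerivAt (fun s : ℝ => (s : ℂ)) 1 s := Complex.ofRealCLM.hasDerivAt
    simpa using ((this.mul_const ((starRingEnd ℂ) a)).const_sub ((starRingEnd ℂ) (w j))).div_const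
      (t : ℂ)
  have d2 : HasDerivAt (fun s : ℝ => -(((w j).re - s * a.re) ^ 2 + ((w j).im - s * a.im) ^ 2 + R)
      / t) ((2 * ((w j).re - s * a.re) * a.re + 2 * ((w j).im - s * a.im) * a.im) / t) s := by
    have r1 := (((hasDerivAt_id s).mul_const a.re).const_sub (w j).re).pow 2
    have r2 := (((hasDerivAt_id s).mul_const a.im).const_sub (w j).im).pow 2
    refine ((((r1.add r2).add_const R).neg).div_const t).congr_deriv ?_
    simp
    ring
  have d3 := d2.exp.ofReal_comp
  refine (((d1.pow (β j)).mul_const P).mul d3).congr_deriv ?_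
  simp
  ring

lemma cnormSq_sub_ge (n : ℕ) (w e : Fin n → ℂ) :
    cnormSq n w / 2 - cnormSq n e ≤ cnormSq n (w - e) := by
  simp only [cnormSq, Finset.sum_div, ← Finset.sum_sub_distrib]
  refine Finset.sum_le_sum fun i _ => ?_
  simp only [Complex.normSq_apply, Pi.sub_apply, Complex.sub_re, Complex.sub_im]
  nlinarith [sq_nonneg ((w i).re - 2 * (e i).re), sq_nonneg ((w i).im - 2 * (e i).im)]

/-! ### Differentiation under the integral sign -/

/-- The convolution-type integral `∫ f(u) ∏ᵢ (conj (uᵢ - zᵢ) / t)^βᵢ exp (-|u - z|² / t) du`. -/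
def gaussConv (n : ℕ) (t : ℝ) (f : (Fin n → ℂ) → ℂ) (β : Fin n → ℕ) (z : Fin n → ℂ) : ℂ :=
  ∫ u, f u * gaussKer n t β (u - z)

lemma integrable_mul_gaussKer (n : ℕ) {t : ℝ} (ht : 0 < t) (f : (Fin n → ℂ) → ℂ)
    (hfm : Measurable f) {C : ℝ} (hC : ∀ z, ‖f z‖ ≤ C) (β : Fin n → ℕ) (z : Fin n → ℂ) :
    Integrable (fun u => f u * gaussKer n t β (u - z)) := by
  obtain ⟨M, hM0, hM⟩ := gaussKer_bound n ht β
  have hC0 : 0 ≤ C := (norm_nonneg _).trans (hC 0)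
  have hi := (((integrable_gauss n (b := 1 / (2 * t)) (by positivity)).comp_sub_right z).const_mul
    (C * M))
  refine hi.mono' ?_ (Eventually.of_forall fun u => ?_)
  · exact (hfm.mul ((continuous_gaussKer n t β).measurable.comp
      (measurable_id.sub_const z))).aestronglyMeasurable
  · rw [norm_mul, mul_assoc]
    exact mul_le_mul (hC u) (hM _) (norm_nonneg _) hC0

lemma hasDerivAt_gaussConv (n : ℕ) {t : ℝ} (ht : 0 < t) (f : (Fin n → ℂ) → ℂ)
    (hfm : Measurable f) {C : ℝ} (hC : ∀ z, ‖f z‖ ≤ C) (β : Fin n → ℕ) (z : Fin n → ℂ)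
    (j : Fin n) (a : ℂ) :
    Integrable (fun u => f u * gaussKerDeriv n t β j a (u - z)) ∧
    HasDerivAt (fun s : ℝ => gaussConv n t f β (z + s • (Pi.single j a : Fin n → ℂ)))
      (∫ u, f u * gaussKerDeriv n t β j a (u - z)) 0 := by
  obtain ⟨M, hM0, hM⟩ := gaussKerDeriv_bound n ht β j a
  have hC0 : 0 ≤ C := (norm_nonneg _).trans (hC 0)
  set e : Fin n → ℂ := Pi.single j a with he
  have hsub : ∀ (u : Fin n → ℂ) (s : ℝ), u - (z + s • e) = (u - z) - s • e := fun u s => by abel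
  -- The dominating function: for `|s| < 1`, `|u - z - s e|² ≥ |u - z|² / 2 - |e|²`.
  let bound : (Fin n → ℂ) → ℝ := fun u =>
    (C * M * Real.exp (1 / (2 * t) * cnormSq n e)) *
      Real.exp (-(1 / (4 * t) * cnormSq n (u - z)))
  have hb : Integrable bound :=
    ((integrable_gauss n (b := 1 / (4 * t)) (by positivity)).comp_sub_right z).const_mul _
  have h := hasDerivAt_integral_of_dominated_loc_of_deriv_le (μ := (volume : Measure (Fin n → ℂ)))
    (F := fun (s : ℝ) u => f u * gaussKer n t β (u - (z + s • e)))
    (F' := fun (s : ℝ) u => f u * gaussKerDeriv n t β j a (u - (z + s • e)))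
    (x₀ := (0 : ℝ)) (s := Metric.ball 0 1) (bound := bound)
    (Metric.ball_mem_nhds _ one_pos)
    (Eventually.of_forall fun s =>
      (integrable_mul_gaussKer n ht f hfm hC β _).aestronglyMeasurable)
    (integrable_mul_gaussKer n ht f hfm hC β _)
    ((hfm.mul ((continuous_gaussKerDeriv n t β j a).measurable.comp
      (measurable_id.sub_const _))).aestronglyMeasurable)
    (Eventually.of_forall fun u s hs => ?_) hb
    (Eventually.of_forall fun u s hs => ?_)
  · simp only [zero_smul, add_zero] at h
    exact h
  · rw [hsub, norm_mul]
    have h1 : cnormSq n (s • e) ≤ cnormSq n e := by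
      refine Finset.sum_le_sum fun i _ => ?_
      have hs1 : |s| < 1 := by simpa using hs
      have hs2 : s * s ≤ 1 := by nlinarith [abs_mul_abs_self s, abs_nonneg s]
      rw [Pi.smul_apply, Complex.real_smul, Complex.normSq_mul, Complex.normSq_ofReal]
      exact mul_le_of_le_one_left (Complex.normSq_nonneg _) hs2
    have h2 := cnormSq_sub_ge n (u - z) (s • e)
    have h3 : Real.exp (-(1 / (2 * t) * cnormSq n (u - z - s • e))) ≤
        Real.exp (1 / (2 * t) * cnormSq n e) * Real.exp (-(1 / (4 * t) * cnormSq n (u - z))) := by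
      rw [← Real.exp_add, Real.exp_le_exp]
      have h4 : 1 / (2 * t) * (cnormSq n (u - z) / 2 - cnormSq n e) ≤
          1 / (2 * t) * cnormSq n (u - z - s • e) :=
        mul_le_mul_of_nonneg_left (by linarith) (by positivity)
      have h5 : 1 / (4 * t) * cnormSq n (u - z) = 1 / (2 * t) * (cnormSq n (u - z) / 2) := by
        field_simp; ring
      rw [h5]; linarith
    calc ‖f u‖ * ‖gaussKerDeriv n t β j a (u - z - s • e)‖
        ≤ C * (M * Real.exp (-(1 / (2 * t) * cnormSq n (u - z - s • e)))) :=
          mul_le_mul (hC u) (hM _) (norm_nonneg _) hC0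
      _ ≤ C * (M * (Real.exp (1 / (2 * t) * cnormSq n e) *
            Real.exp (-(1 / (4 * t) * cnormSq n (u - z))))) := by gcongr
      _ = bound u := by simp only [bound]; ring
  · have := (hasDerivAt_gaussKer n t β j a (u - z) s).const_mul (f u)
    simpa only [hsub] using this

/-- `∂ⱼ` raises the exponent: `∂ⱼ` annihilates the antiholomorphic factor of the kernel, and brings
down `conj (uⱼ - zⱼ) / t` from the Gaussian. -/
lemma wDz_gaussConv (n : ℕ) {t : ℝ} (ht : 0 < t) (f : (Fin n → ℂ) → ℂ)
    (hfm : Measurable f) {C : ℝ} (hC : ∀ z, ‖f z‖ ≤ C) (β : Fin n → ℕ) (j : Fin n) :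
    wDz n j (gaussConv n t f β) = gaussConv n t f (β + Pi.single j 1) := by
  funext z
  obtain ⟨i1, d1⟩ := hasDerivAt_gaussConv n ht f hfm hC β z j 1
  obtain ⟨i2, d2⟩ := hasDerivAt_gaussConv n ht f hfm hC β z j Complex.I
  rw [wDz, lineDeriv, lineDeriv, d1.deriv, d2.deriv, ← integral_const_mul,
    ← integral_sub i1 (i2.const_mul _), ← integral_div, gaussConv]
  refine integral_congr_ae (Eventually.of_forall fun u => ?_)
  simp only [gaussKer_add_single, gaussKerDeriv]
  set x := (u - z) j
  have hx : (starRingEnd ℂ) x = (x.re : ℂ) - Complex.I * (x.im : ℂ) := by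
    apply Complex.ext <;> simp
  have r1 : ((starRingEnd ℂ) x * 1).re = x.re := by simp
  have r2 : ((starRingEnd ℂ) x * Complex.I).re = x.im := by simp
  rw [r1, r2, hx]
  simp only [map_one, Complex.conj_I]
  push_cast
  linear_combination (-(f u * (β j) / t * gaussKer n t (β - Pi.single j 1) (u - z)) / 2) *
    Complex.I_mul_I

lemma wDz_iterate_gaussConv (n : ℕ) {t : ℝ} (ht : 0 < t) (f : (Fin n → ℂ) → ℂ)
    (hfm : Measurable f) {C : ℝ} (hC : ∀ z, ‖f z‖ ≤ C) (j : Fin n) (k : ℕ) (β : Fin n → ℕ) :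
    (wDz n j)^[k] (gaussConv n t f β) = gaussConv n t f (β + Pi.single j k) := by
  induction k generalizing β with
  | zero => simp
  | succ k ih =>
    rw [Function.iterate_succ_apply, wDz_gaussConv n ht f hfm hC, ih, add_assoc, ← Pi.single_add,
      add_comm 1 k]

lemma wD_gaussConv (n : ℕ) {t : ℝ} (ht : 0 < t) (f : (Fin n → ℂ) → ℂ)
    (hfm : Measurable f) {C : ℝ} (hC : ∀ z, ‖f z‖ ≤ C) (α : Fin n → ℕ) :
    wD n α (gaussConv n t f 0) = gaussConv n t f α := by
  have key : ∀ l : List (Fin n), (l.map fun j => (wDz n j)^[α j]).foldr (· ∘ ·) id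
      (gaussConv n t f 0) = gaussConv n t f (l.map fun j => Pi.single j (α j)).sum := by
    intro l
    induction l with
    | nil => simp
    | cons j l ih =>
      simp only [List.map_cons, List.foldr_cons, Function.comp_apply, List.sum_cons]
      rw [ih, wDz_iterate_gaussConv n ht f hfm hC, add_comm]
  rw [wD, List.ofFn_eq_map, key]
  congr 1
  rw [← List.ofFn_eq_map, List.sum_ofFn, Finset.univ_sum_single]

/-! ### Derivatives of the heat transform -/

lemma heat_eq_gaussConv (n : ℕ) {t : ℝ} (ht : 0 < t) (f : (Fin n → ℂ) → ℂ) :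
    ∃ c : ℂ, heat n t f = gaussConv n t (fun u => c * f u) 0 ∧
      ∀ α z, gaussConv n t (fun u => c * f u) α z =
        (Real.pi ^ n)⁻¹ • ∫ w, f (Real.sqrt t • w + z) * gaussKer n t α (Real.sqrt t • w) := by
  have h : ∀ α z, gaussConv n t (fun u => (((Real.pi ^ n)⁻¹ *
      |(Real.sqrt t ^ Module.finrank ℝ (Fin n → ℂ))⁻¹| : ℝ) : ℂ) * f u) α z =
        (Real.pi ^ n)⁻¹ • ∫ w, f (Real.sqrt t • w + z) * gaussKer n t α (Real.sqrt t • w) := by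
    intro α z
    rw [Measure.integral_comp_smul (volume : Measure (Fin n → ℂ))
      (fun w => f (w + z) * gaussKer n t α w) (Real.sqrt t), smul_smul, gaussConv]
    have : ∫ w, f (w + z) * gaussKer n t α w = ∫ u, f u * gaussKer n t α (u - z) := by
      rw [← integral_add_right_eq_self (fun u => f u * gaussKer n t α (u - z)) z]
      simp
    rw [this, Complex.real_smul, ← integral_const_mul]
    simp only [mul_assoc]
  refine ⟨_, ?_, h⟩
  funext z
  rw [h, heat]
  congr 1
  refine integral_congr_ae (Eventually.of_forall fun w => ?_)
  have : -cnormSq n (Real.sqrt t • w) / t = -cnormSq n w := by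
    simp only [cnormSq, Pi.smul_apply, Complex.real_smul, Complex.normSq_mul,
      Complex.normSq_ofReal, Real.mul_self_sqrt ht.le, ← Finset.mul_sum]
    field_simp
  simp only [gaussKer, this, Pi.zero_apply, pow_zero, Finset.prod_const_one, one_mul,
    Complex.real_smul, mul_comm]

lemma gaussKer_sqrt_smul (n : ℕ) {t : ℝ} (ht : 0 < t) (α : Fin n → ℕ) (w : Fin n → ℂ) :
    gaussKer n t α (Real.sqrt t • w) = ((Real.sqrt t : ℂ) / t) ^ msum n α *
      ((∏ i, (starRingEnd ℂ) (w i) ^ α i) * (Real.exp (-cnormSq n w) : ℝ)) := by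
  have h1 : -cnormSq n (Real.sqrt t • w) / t = -cnormSq n w := by
    simp only [cnormSq, Pi.smul_apply, Complex.real_smul, Complex.normSq_mul,
      Complex.normSq_ofReal, Real.mul_self_sqrt ht.le, ← Finset.mul_sum]
    field_simp
  have h2 : ∀ i, ((starRingEnd ℂ) ((Real.sqrt t • w) i) / (t : ℂ)) ^ α i =
      ((Real.sqrt t : ℂ) / t) ^ α i * (starRingEnd ℂ) (w i) ^ α i := by
    intro i
    rw [← mul_pow, Pi.smul_apply, Complex.real_smul, map_mul, Complex.conj_ofReal]
    congr 1; ring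
  rw [gaussKer, h1, Finset.prod_congr rfl fun i _ => h2 i, Finset.prod_mul_distrib,
    Finset.prod_pow_eq_pow_sum, msum, mul_assoc]

lemma wD_heat (n : ℕ) {t : ℝ} (ht : 0 < t) (f : (Fin n → ℂ) → ℂ)
    (hfm : Measurable f) {C : ℝ} (hC : ∀ z, ‖f z‖ ≤ C) (α : Fin n → ℕ) (z : Fin n → ℂ) :
    wD n α (heat n t f) z = ((Real.pi : ℂ) ^ n)⁻¹ * ((Real.sqrt t : ℂ) / t) ^ msum n α *
      ∫ w, f (Real.sqrt t • w + z) *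
        ((∏ i, (starRingEnd ℂ) (w i) ^ α i) * (Real.exp (-cnormSq n w) : ℝ)) := by
  obtain ⟨c, h1, h2⟩ := heat_eq_gaussConv n ht f
  rw [h1, wD_gaussConv n ht (fun u => c * f u) (hfm.const_mul c) (C := ‖c‖ * C) (fun z => by
    rw [norm_mul]; exact mul_le_mul_of_nonneg_left (hC z) (norm_nonneg _)), h2, Complex.real_smul,
    mul_assoc, Complex.ofReal_inv, Complex.ofReal_pow]
  refine congrArg (((Real.pi : ℂ) ^ n)⁻¹ * ·) ?_
  rw [← integral_const_mul]
  refine integral_congr_ae (Eventually.of_forall fun w => ?_)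
  simp only [gaussKer_sqrt_smul n ht]
  ring

lemma lineDeriv_conj (n : ℕ) (F : (Fin n → ℂ) → ℂ) (z e : Fin n → ℂ) :
    lineDeriv ℝ (fun z => (starRingEnd ℂ) (F z)) z e = (starRingEnd ℂ) (lineDeriv ℝ F z e) := by
  exact deriv.star (𝕜 := ℝ) (f := fun s : ℝ => F (z + s • e)) (x := 0)

lemma wDzbar_conj (n : ℕ) (j : Fin n) (F : (Fin n → ℂ) → ℂ) :
    wDzbar n j (fun z => (starRingEnd ℂ) (F z)) = fun z => (starRingEnd ℂ) (wDz n j F z) := by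
  funext z
  rw [wDzbar, wDz, lineDeriv_conj, lineDeriv_conj]
  simp [Complex.conj_ofNat]

lemma wDbar_conj (n : ℕ) (α : Fin n → ℕ) (F : (Fin n → ℂ) → ℂ) :
    wDbar n α (fun z => (starRingEnd ℂ) (F z)) = fun z => (starRingEnd ℂ) (wD n α F z) := by
  have it : ∀ (j : Fin n) (k : ℕ) (F : (Fin n → ℂ) → ℂ),
      (wDzbar n j)^[k] (fun z => (starRingEnd ℂ) (F z)) =
        fun z => (starRingEnd ℂ) ((wDz n j)^[k] F z) := by
    intro j k
    induction k with
    | zero => intro F; rfl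
    | succ k ih =>
      intro F
      rw [Function.iterate_succ_apply, wDzbar_conj, ih]
      rfl
  rw [wDbar, wD, List.ofFn_eq_map, List.ofFn_eq_map]
  generalize List.finRange n = l
  induction l with
  | nil => rfl
  | cons j l ih =>
    simp only [List.map_cons, List.foldr_cons, Function.comp_apply]
    rw [ih, it]

/-- The formula for `∂̄^α` follows from the one for `∂^α` by complex conjugation. -/
lemma wDbar_heat (n : ℕ) {t : ℝ} (ht : 0 < t) (g : (Fin n → ℂ) → ℂ)
    (hgm : Measurable g) {C : ℝ} (hC : ∀ z, ‖g z‖ ≤ C) (α : Fin n → ℕ) (z : Fin n → ℂ) :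
    wDbar n α (heat n t g) z = ((Real.pi : ℂ) ^ n)⁻¹ * ((Real.sqrt t : ℂ) / t) ^ msum n α *
      ∫ w, g (Real.sqrt t • w + z) *
        ((∏ i, w i ^ α i) * (Real.exp (-cnormSq n w) : ℝ)) := by
  have h1 : heat n t g = fun z =>
      (starRingEnd ℂ) (heat n t (fun u => (starRingEnd ℂ) (g u)) z) := by
    funext z
    simp only [heat, Complex.real_smul, map_mul, Complex.conj_ofReal, ← integral_conj,
      Complex.conj_conj]
  rw [h1, wDbar_conj]
  simp only
  rw [wD_heat n ht (fun u => (starRingEnd ℂ) (g u)) (Complex.continuous_conj.measurable.comp hgm)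
    (C := C) (fun z => by rw [RCLike.norm_conj]; exact hC z)]
  simp only [map_mul, map_inv₀, map_pow, map_div₀, Complex.conj_ofReal, ← integral_conj,
    Complex.conj_conj, map_prod]

/-! ### The multivariate exponential series and the sum -/

lemma hasSum_multi_exp (n : ℕ) (x : Fin n → ℂ) :
    HasSum (fun α : Fin n → ℕ => ∏ i, x i ^ α i / ((α i).factorial : ℂ))
      (Complex.exp (∑ i, x i)) := by
  induction n with
  | zero => simp
  | succ n ih =>
    have h0 : HasSum (fun k : ℕ => x 0 ^ k / (k.factorial : ℂ)) (Complex.exp (x 0)) := by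
      rw [Complex.exp_eq_exp_ℂ]
      exact NormedSpace.expSeries_div_hasSum_exp (x 0)
    have h1 := ih (fun i => x i.succ)
    have h2 := h0.mul h1 (summable_mul_of_summable_norm
      (f := fun k : ℕ => x 0 ^ k / (k.factorial : ℂ))
      (g := fun α : Fin n → ℕ => ∏ i, x i.succ ^ α i / ((α i).factorial : ℂ))
      h0.summable.norm h1.summable.norm)
    rw [Fin.sum_univ_succ, Complex.exp_add, ← (Fin.consEquiv fun _ => ℕ).hasSum_iff]
    refine h2.congr_fun fun p => ?_
    simp [Fin.consEquiv, Fin.prod_univ_succ, mul_div_mul_comm]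

lemma hasSum_multi_exp_real (n : ℕ) (x : Fin n → ℝ) :
    HasSum (fun α : Fin n → ℕ => ∏ i, x i ^ α i / ((α i).factorial : ℝ))
      (Real.exp (∑ i, x i)) := by
  have h := hasSum_multi_exp n (fun i => (x i : ℂ))
  rw [← Complex.hasSum_ofReal]
  push_cast
  exact h

lemma sum_norm_mul_le (n : ℕ) (v w : Fin n → ℂ) :
    ∑ i, ‖w i‖ * ‖v i‖ ≤ cnormSq n v / 2 + cnormSq n w / 2 := by
  simp only [cnormSq, Finset.sum_div, ← Finset.sum_add_distrib]
  refine Finset.sum_le_sum fun i _ => ?_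
  rw [Complex.normSq_eq_norm_sq, Complex.normSq_eq_norm_sq]
  nlinarith [sq_nonneg (‖w i‖ - ‖v i‖)]

/-- The `α`-th term of the expansion of the integrand of `S_t(f,g)` into a power series, where `f`
and `g` are already composed with `w ↦ √t w + z`. -/
def sharpTerm (n : ℕ) (f g : (Fin n → ℂ) → ℂ) (α : Fin n → ℕ)
    (p : (Fin n → ℂ) × (Fin n → ℂ)) : ℂ :=
  (f p.1 * g p.2 * ((Real.exp (-cnormSq n p.1) : ℝ) * (Real.exp (-cnormSq n p.2) : ℝ))) *
    ∏ i, (-(p.2 i * (starRingEnd ℂ) (p.1 i))) ^ α i / ((α i).factorial : ℂ)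

/-- The integrand of `S_t(f,g)`, where `f` and `g` are already composed with `w ↦ √t w + z`. -/
def sharpIntegrand (n : ℕ) (f g : (Fin n → ℂ) → ℂ) (p : (Fin n → ℂ) × (Fin n → ℂ)) : ℂ :=
  f p.1 * g p.2 * Complex.exp (-(∑ j, p.2 j * (starRingEnd ℂ) (p.1 j)) - (cnormSq n p.1 : ℂ)
    - (cnormSq n p.2 : ℂ))

lemma hasSum_sharpTerm (n : ℕ) (f g : (Fin n → ℂ) → ℂ) (p : (Fin n → ℂ) × (Fin n → ℂ)) :
    HasSum (fun α => sharpTerm n f g α p) (sharpIntegrand n f g p) := by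
  have h := (hasSum_multi_exp n fun i => -(p.2 i * (starRingEnd ℂ) (p.1 i))).mul_left
    (f p.1 * g p.2 * ((Real.exp (-cnormSq n p.1) : ℝ) * (Real.exp (-cnormSq n p.2) : ℝ)))
  refine (congrArg (HasSum _) ?_).mpr h
  rw [sharpIntegrand, Complex.ofReal_exp, Complex.ofReal_exp, mul_assoc (f p.1 * g p.2),
    ← Complex.exp_add, ← Complex.exp_add, Finset.sum_neg_distrib]
  congr 2
  push_cast
  ring

/-- Half of the Gaussian weight dominates the absolute series `exp (∑ |wᵢ| |vᵢ|)`. -/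
lemma exp_dominate (n : ℕ) (v w : Fin n → ℂ) :
    Real.exp (-cnormSq n v) * Real.exp (-cnormSq n w) * Real.exp (∑ i, ‖w i‖ * ‖v i‖) ≤
      Real.exp (-(1 / 2 * cnormSq n v)) * Real.exp (-(1 / 2 * cnormSq n w)) := by
  rw [← Real.exp_add, ← Real.exp_add, ← Real.exp_add, Real.exp_le_exp]
  linarith [sum_norm_mul_le n v w]

lemma integrable_double_gauss (n : ℕ) (K : ℝ) :
    Integrable (fun p : (Fin n → ℂ) × (Fin n → ℂ) =>
      K * (Real.exp (-(1 / 2 * cnormSq n p.1)) * Real.exp (-(1 / 2 * cnormSq n p.2))))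
      (volume.prod volume) :=
  ((integrable_gauss n (b := 1 / 2) (by norm_num)).mul_prod
    (integrable_gauss n (b := 1 / 2) (by norm_num))).const_mul K

lemma measurable_sharpIntegrand (n : ℕ) (f g : (Fin n → ℂ) → ℂ) (hf : Measurable f)
    (hg : Measurable g) : Measurable (sharpIntegrand n f g) := by
  have := (continuous_cnormSq n).measurable
  have hc := Complex.continuous_conj.measurable
  unfold sharpIntegrand
  fun_prop

lemma measurable_sharpTerm (n : ℕ) (f g : (Fin n → ℂ) → ℂ) (hf : Measurable f)
    (hg : Measurable g) (α : Fin n → ℕ) : Measurable (sharpTerm n f g α) := by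
  have := (continuous_cnormSq n).measurable
  have hc := Complex.continuous_conj.measurable
  unfold sharpTerm
  fun_prop

lemma integrable_sharpIntegrand (n : ℕ) (f g : (Fin n → ℂ) → ℂ) (hf : Measurable f)
    (hg : Measurable g) {A B : ℝ} (hA : ∀ z, ‖f z‖ ≤ A) (hB : ∀ z, ‖g z‖ ≤ B) :
    Integrable (sharpIntegrand n f g) (volume.prod volume) := by
  have hA0 : 0 ≤ A := (norm_nonneg _).trans (hA 0)
  have hB0 : 0 ≤ B := (norm_nonneg _).trans (hB 0)
  refine (integrable_double_gauss n (A * B)).mono'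
    (measurable_sharpIntegrand n f g hf hg).aestronglyMeasurable
    (Eventually.of_forall fun p => ?_)
  rw [sharpIntegrand, norm_mul, norm_mul]
  refine mul_le_mul (mul_le_mul (hA _) (hB _) (norm_nonneg _) hA0) ?_ (norm_nonneg _)
    (by positivity)
  refine le_trans ?_ (exp_dominate n p.1 p.2)
  rw [Complex.norm_exp, ← Real.exp_add, ← Real.exp_add, Real.exp_le_exp]
  have h : -(∑ j, p.2 j * (starRingEnd ℂ) (p.1 j)).re ≤ ∑ i, ‖p.2 i‖ * ‖p.1 i‖ := by
    refine (neg_le_abs _).trans ((Complex.abs_re_le_norm _).trans ((norm_sum_le _ _).trans ?_))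
    simp
  simp only [Complex.sub_re, Complex.neg_re, Complex.ofReal_re]
  linarith

/-- Termwise integration of the exponential series, by dominated convergence. -/
lemma hasSum_integral_sharpTerm (n : ℕ) (f g : (Fin n → ℂ) → ℂ) (hf : Measurable f)
    (hg : Measurable g) {A B : ℝ} (hA : ∀ z, ‖f z‖ ≤ A) (hB : ∀ z, ‖g z‖ ≤ B) :
    HasSum (fun α => ∫ p, sharpTerm n f g α p ∂(volume.prod volume))
      (∫ p, sharpIntegrand n f g p ∂(volume.prod volume)) := by
  have hA0 : 0 ≤ A := (norm_nonneg _).trans (hA 0)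
  have hB0 : 0 ≤ B := (norm_nonneg _).trans (hB 0)
  have hs : ∀ p : (Fin n → ℂ) × (Fin n → ℂ), HasSum (fun α : Fin n → ℕ =>
      A * B * (Real.exp (-cnormSq n p.1) * Real.exp (-cnormSq n p.2)) *
        ∏ i, (‖p.2 i‖ * ‖p.1 i‖) ^ α i / ((α i).factorial : ℝ))
      (A * B * (Real.exp (-cnormSq n p.1) * Real.exp (-cnormSq n p.2)) *
        Real.exp (∑ i, ‖p.2 i‖ * ‖p.1 i‖)) := fun p =>
    (hasSum_multi_exp_real n fun i => ‖p.2 i‖ * ‖p.1 i‖).mul_left _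
  refine hasSum_integral_of_dominated_convergence
    (fun α p => A * B * (Real.exp (-cnormSq n p.1) * Real.exp (-cnormSq n p.2)) *
        ∏ i, (‖p.2 i‖ * ‖p.1 i‖) ^ α i / ((α i).factorial : ℝ))
    (fun α => (measurable_sharpTerm n f g hf hg α).aestronglyMeasurable)
    (fun α => Eventually.of_forall fun p => ?_)
    (Eventually.of_forall fun p => (hs p).summable) ?_
    (Eventually.of_forall fun p => hasSum_sharpTerm n f g p)
  · have hprod : ‖∏ i, (-(p.2 i * (starRingEnd ℂ) (p.1 i))) ^ α i / ((α i).factorial : ℂ)‖ =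
        ∏ i, (‖p.2 i‖ * ‖p.1 i‖) ^ α i / ((α i).factorial : ℝ) := by
      simp [norm_prod]
    rw [sharpTerm, norm_mul, hprod, norm_mul, norm_mul, norm_mul, Complex.norm_real,
      Complex.norm_real, Real.norm_of_nonneg (Real.exp_pos _).le,
      Real.norm_of_nonneg (Real.exp_pos _).le]
    gcongr
    · exact hA _
    · exact hB _
  · have hm := (continuous_cnormSq n).measurable
    simp only [fun p => (hs p).tsum_eq]
    refine (integrable_double_gauss n (A * B)).mono' ?_ (Eventually.of_forall fun p => ?_)
    · refine Measurable.aestronglyMeasurable ?_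
      fun_prop
    · rw [Real.norm_of_nonneg (by positivity), mul_assoc]
      exact mul_le_mul_of_nonneg_left (exp_dominate n p.1 p.2) (by positivity)

lemma integral_sharpTerm (n : ℕ) (f g : (Fin n → ℂ) → ℂ) (α : Fin n → ℕ) :
    ∫ p, sharpTerm n f g α p ∂(volume.prod volume) =
      (-1) ^ msum n α / (mfact n α : ℂ) *
      ((∫ v, f v * ((∏ i, (starRingEnd ℂ) (v i) ^ α i) * (Real.exp (-cnormSq n v) : ℝ))) *
       ∫ w, g w * ((∏ i, w i ^ α i) * (Real.exp (-cnormSq n w) : ℝ))) := by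
  rw [← integral_prod_mul, ← integral_const_mul]
  refine integral_congr_ae (Eventually.of_forall fun p => ?_)
  have h : ∏ i, (-(p.2 i * (starRingEnd ℂ) (p.1 i))) ^ α i / ((α i).factorial : ℂ) =
      (-1) ^ msum n α / (mfact n α : ℂ) * ((∏ i, (starRingEnd ℂ) (p.1 i) ^ α i) *
        ∏ i, p.2 i ^ α i) := by
    rw [Finset.prod_div_distrib, mfact, msum, ← Finset.prod_pow_eq_pow_sum,
      ← Finset.prod_mul_distrib, div_mul_eq_mul_div, ← Finset.prod_mul_distrib]
    push_cast
    congr 1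
    refine Finset.prod_congr rfl fun i _ => ?_
    rw [← mul_pow, ← mul_pow]
    congr 1; ring
  simp only [sharpTerm, h]
  ring

theorem sharp_product_series (n : ℕ) (f g : (Fin n → ℂ) → ℂ)
    (hfm : Measurable f) (hgm : Measurable g)
    (hfb : ∃ C, ∀ z, ‖f z‖ ≤ C) (hgb : ∃ C, ∀ z, ‖g z‖ ≤ C)
    (t : ℝ) (ht : 0 < t) (z : Fin n → ℂ) :
    (Summable fun α : Fin n → ℕ =>
        ‖(((-t : ℂ) ^ msum n α) / (mfact n α : ℂ)) *
          (wD n α (heat n t f) z * wDbar n α (heat n t g) z)‖) ∧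
      HasSum (fun α : Fin n → ℕ =>
        (((-t : ℂ) ^ msum n α) / (mfact n α : ℂ)) *
          (wD n α (heat n t f) z * wDbar n α (heat n t g) z))
        (sharpInt n t f g z) := by
  obtain ⟨A, hA⟩ := hfb
  obtain ⟨B, hB⟩ := hgb
  -- In `ℂ`, unconditional summability implies absolute summability.
  suffices h : HasSum (fun α : Fin n → ℕ =>
        (((-t : ℂ) ^ msum n α) / (mfact n α : ℂ)) *
          (wD n α (heat n t f) z * wDbar n α (heat n t g) z))
        (sharpInt n t f g z) from ⟨h.summable.norm, h⟩
  have hF : Measurable fun w : Fin n → ℂ => f (Real.sqrt t • w + z) :=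
    hfm.comp ((measurable_const_smul _).add_const z)
  have hG : Measurable fun w : Fin n → ℂ => g (Real.sqrt t • w + z) :=
    hgm.comp ((measurable_const_smul _).add_const z)
  have hsum := (hasSum_integral_sharpTerm n _ _ hF hG (fun w => hA _) (fun w => hB _)).mul_left
    (((Real.pi : ℂ) ^ (2 * n))⁻¹)
  rw [integral_prod _ (integrable_sharpIntegrand n _ _ hF hG (fun w => hA _) (fun w => hB _))]
    at hsum
  have hval : sharpInt n t f g z = ((Real.pi : ℂ) ^ (2 * n))⁻¹ * ∫ v : Fin n → ℂ,
      ∫ w : Fin n → ℂ, sharpIntegrand n (fun w => f (Real.sqrt t • w + z))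
        (fun w => g (Real.sqrt t • w + z)) (v, w) := by
    rw [sharpInt, Complex.real_smul]
    push_cast
    rfl
  rw [hval]
  refine hsum.congr_fun fun α => ?_
  rw [integral_sharpTerm, wD_heat n ht f hfm hA, wDbar_heat n ht g hgm hB]
  have hsq : ((Real.sqrt t : ℂ) / t) * ((Real.sqrt t : ℂ) / t) * (-t) = -1 := by
    have ht' : (t : ℂ) ≠ 0 := by exact_mod_cast ht.ne'
    have : (Real.sqrt t : ℂ) * (Real.sqrt t : ℂ) = t := by
      exact_mod_cast Real.mul_self_sqrt ht.le
    field_simp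
    rw [pow_two, this]
  rw [← hsq, mul_pow, mul_pow, two_mul, pow_add, mul_inv]
  ring
end
end

section
/- Let α, β, γ, ε ∈ ℕ_0^n be multi-indices. Then π^{−2n} ∫_{ℂ^n} ∫_{ℂ^n} v^α \bar{v}^β w^γ \bar{w}^ε e^{−⟨w,v⟩ − |v|² − |w|²} dv dw equals 0 if α_j < β_j or γ_j > ε_j for some j ∈ {1,…,n}, and otherwise (i.e. if α ≥ β and ε ≥ γ componentwise) equals (−1)^{|α|−|β|} (α! ε! / (α−β)!) if α − β = ε − γ and 0 if α − β ≠ ε − γ. -/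
/-!
The integrand is a product over `j` of functions of `(vⱼ, wⱼ)`, so Fubini's theorem reduces the
claim to one complex dimension (`integral_one_dim`). There `exp (-w v̄)` is expanded into its power
series, which may be integrated term by term against the Gaussian in `w`
(`integral_mul_exp_linear`). Everything then follows from the orthogonality of monomials,
`∫ z ^ a z̄ ^ b exp (-|z|²) = π a!` if `a = b` and `0` otherwise (`gaussian_moment`): the only
surviving term of the series is the one of degree `k = ε - γ`, and integrating it in `v`
requires `k = α - β`.
-/

open MeasureTheory

noncomputable section

/-- Off the diagonal, the substitution `z ↦ c z` with `|c| = 1` and `c ^ a c̄ ^ b = -1` shows that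
the integral equals its own negative; on the diagonal it is a Gamma integral. -/
lemma gaussian_moment (a b : ℕ) :
    ∫ z : ℂ, z ^ a * (starRingEnd ℂ) z ^ b * Complex.exp (-(Complex.normSq z : ℂ)) =
      if a = b then (Real.pi : ℂ) * (a.factorial : ℂ) else 0 := by
  split_ifs with h
  · subst h
    have h1 := Complex.integral_rpow_mul_exp_neg_rpow (p := 2) (q := 2 * a) (by norm_num)
      (by have : (0 : ℝ) ≤ a := a.cast_nonneg
          linarith)
    have h2 : (2 * (a : ℝ) + 2) / 2 = a + 1 := by ring
    rw [h2, Real.Gamma_nat_eq_factorial] at h1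
    have h3 : ∀ z : ℂ, z ^ a * (starRingEnd ℂ) z ^ a * Complex.exp (-(Complex.normSq z : ℂ)) =
        ((‖z‖ ^ (2 * (a : ℝ)) * Real.exp (-‖z‖ ^ (2 : ℝ)) : ℝ) : ℂ) := by
      intro z
      rw [← mul_pow, Complex.mul_conj, Complex.normSq_eq_norm_sq, Real.rpow_mul (norm_nonneg z),
        Real.rpow_natCast, Real.rpow_two]
      push_cast
      rfl
    simp_rw [h3]
    rw [integral_complex_ofReal, h1]
    push_cast
    ring
  · set I := ∫ z : ℂ, z ^ a * (starRingEnd ℂ) z ^ b * Complex.exp (-(Complex.normSq z : ℂ))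
      with hI
    have hab : (a : ℂ) - b ≠ 0 := sub_ne_zero.mpr (by exact_mod_cast h)
    set θ : ℝ := Real.pi / ((a : ℝ) - b) with hθ
    set c : Circle := Circle.exp θ with hc
    have hcc : (c : ℂ) ^ a * (starRingEnd ℂ) (c : ℂ) ^ b = -1 := by
      rw [hc, Circle.coe_exp, ← Complex.exp_conj, ← Complex.exp_nat_mul, ← Complex.exp_nat_mul,
        ← Complex.exp_add, ← Complex.exp_pi_mul_I]
      congr 1
      rw [map_mul, Complex.conj_ofReal, Complex.conj_I, hθ]
      push_cast
      field_simp
      ring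
    have hrot := (LinearIsometryEquiv.measurePreserving (rotation c)).integral_comp
      (rotation c).toHomeomorph.measurableEmbedding
      (fun z : ℂ => z ^ a * (starRingEnd ℂ) z ^ b * Complex.exp (-(Complex.normSq z : ℂ)))
    have hneg : ∀ z : ℂ, (rotation c z) ^ a * (starRingEnd ℂ) (rotation c z) ^ b *
        Complex.exp (-(Complex.normSq (rotation c z) : ℂ)) =
        -1 * (z ^ a * (starRingEnd ℂ) z ^ b * Complex.exp (-(Complex.normSq z : ℂ))) := by
      intro z
      rw [rotation_apply, map_mul, map_mul, mul_pow, mul_pow, Circle.normSq_coe, one_mul, ← hcc]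
      ring
    simp_rw [hneg] at hrot
    rw [integral_const_mul, ← hI] at hrot
    linear_combination (-1 / 2 : ℂ) * hrot

/-- Integrability follows from the known nonzero value of the integral, since the Bochner integral
of a non-integrable function is `0` by convention. -/
lemma integrable_pow_mul_gaussian (m : ℕ) :
    Integrable (fun z : ℂ => ‖z‖ ^ m * Real.exp (-(1 / 2) * ‖z‖ ^ 2)) := by
  have hm : (0 : ℝ) ≤ m := m.cast_nonneg
  have h1 := Complex.integral_rpow_mul_exp_neg_mul_rpow (p := 2) (q := m) (b := 1 / 2)
    (by norm_num) (by linarith) (by norm_num)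
  simp only [Real.rpow_natCast, Real.rpow_two] at h1
  by_contra hcon
  rw [integral_undef hcon] at h1
  have : 0 < Real.Gamma (((m : ℝ) + 2) / 2) := Real.Gamma_pos_of_pos (by positivity)
  have h2 : 0 < 2 * Real.pi / 2 * (1 / 2 : ℝ) ^ (-((m : ℝ) + 2) / 2) *
    Real.Gamma (((m : ℝ) + 2) / 2) := by positivity
  exact h2.ne h1

/-- The power series of `exp (-w u)` is integrated term by term, dominated by
`|w| ^ (γ + ε) exp (|u| |w| - |w|²)`. -/
lemma integral_mul_exp_linear (γ ε : ℕ) (u : ℂ) :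
    ∫ w : ℂ, w ^ γ * (starRingEnd ℂ) w ^ ε * Complex.exp (-(w * u)) *
        Complex.exp (-(Complex.normSq w : ℂ)) =
      if γ ≤ ε then
        (-u) ^ (ε - γ) / ((ε - γ).factorial : ℂ) * ((Real.pi : ℂ) * (ε.factorial : ℂ))
      else 0 := by
  have key := hasSum_integral_of_dominated_convergence (μ := (volume : Measure ℂ))
    (F := fun (k : ℕ) (w : ℂ) => ((-u) ^ k / (k.factorial : ℂ)) *
      (w ^ (γ + k) * (starRingEnd ℂ) w ^ ε * Complex.exp (-(Complex.normSq w : ℂ))))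
    (f := fun w => w ^ γ * (starRingEnd ℂ) w ^ ε * Complex.exp (-(w * u)) *
        Complex.exp (-(Complex.normSq w : ℂ)))
    (fun k w => (‖u‖ * ‖w‖) ^ k / (k.factorial : ℝ) * (‖w‖ ^ (γ + ε) * Real.exp (-‖w‖ ^ 2)))
    ?_ ?_ ?_ ?_ ?_
  · simp_rw [integral_const_mul, gaussian_moment] at key
    refine key.unique ?_
    split_ifs with h
    · convert hasSum_single (ε - γ) ?_ using 1
      · rw [if_pos (by lia), Nat.add_sub_cancel' h]
      · intro k hk
        rw [if_neg (by lia), mul_zero]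
    · have hz : ∀ k : ℕ, ((-u) ^ k / (k.factorial : ℂ) *
          if γ + k = ε then (Real.pi : ℂ) * ((γ + k).factorial : ℂ) else 0) = 0 := fun k => by
        rw [if_neg (by lia), mul_zero]
      simp_rw [hz]
      exact hasSum_zero
  · intro k
    refine Continuous.aestronglyMeasurable ?_
    have := Complex.continuous_normSq
    fun_prop
  · intro k
    refine Filter.Eventually.of_forall fun w => le_of_eq ?_
    have h1 : ‖Complex.exp (-(Complex.normSq w : ℂ))‖ = Real.exp (-‖w‖ ^ 2) := by
      rw [Complex.norm_exp, Complex.normSq_eq_norm_sq, ← Complex.ofReal_neg, Complex.ofReal_re]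
    simp only [norm_mul, norm_div, norm_pow, norm_neg, RCLike.norm_conj, h1, Complex.norm_natCast]
    ring
  · refine Filter.Eventually.of_forall fun w => ?_
    exact (Real.summable_pow_div_factorial _).mul_right _
  · have h1 : ∀ w : ℂ, ∑' k : ℕ, (‖u‖ * ‖w‖) ^ k / (k.factorial : ℝ) *
        (‖w‖ ^ (γ + ε) * Real.exp (-‖w‖ ^ 2)) =
        Real.exp (‖u‖ * ‖w‖) * (‖w‖ ^ (γ + ε) * Real.exp (-‖w‖ ^ 2)) := by
      intro w
      rw [tsum_mul_right, Real.exp_eq_exp_ℝ, (NormedSpace.expSeries_div_hasSum_exp _).tsum_eq]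
    simp_rw [h1]
    refine ((integrable_pow_mul_gaussian (γ + ε)).const_mul (Real.exp (‖u‖ ^ 2 / 2))).mono'
      (Continuous.aestronglyMeasurable (by fun_prop)) (Filter.Eventually.of_forall fun w => ?_)
    rw [Real.norm_of_nonneg (by positivity)]
    -- `|u| |w| ≤ |u|² / 2 + |w|² / 2`
    have h2 : Real.exp (‖u‖ * ‖w‖) * Real.exp (-‖w‖ ^ 2) ≤
        Real.exp (‖u‖ ^ 2 / 2) * Real.exp (-(1 / 2) * ‖w‖ ^ 2) := by
      rw [← Real.exp_add, ← Real.exp_add]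
      exact Real.exp_le_exp.mpr (by nlinarith [sq_nonneg (‖u‖ - ‖w‖)])
    have h3 := mul_le_mul_of_nonneg_left h2 (pow_nonneg (norm_nonneg w) (γ + ε))
    linarith
  · refine Filter.Eventually.of_forall fun w => ?_
    have h1 := NormedSpace.expSeries_div_hasSum_exp (-(w * u))
    rw [← Complex.exp_eq_exp_ℂ] at h1
    have h2 := h1.mul_left
      (w ^ γ * (starRingEnd ℂ) w ^ ε * Complex.exp (-(Complex.normSq w : ℂ)))
    have h3 : ∀ k : ℕ, w ^ γ * (starRingEnd ℂ) w ^ ε * Complex.exp (-(Complex.normSq w : ℂ)) *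
        ((-(w * u)) ^ k / (k.factorial : ℂ)) = ((-u) ^ k / (k.factorial : ℂ)) *
        (w ^ (γ + k) * (starRingEnd ℂ) w ^ ε * Complex.exp (-(Complex.normSq w : ℂ))) := fun k => by
      rw [neg_mul_eq_mul_neg, mul_pow, pow_add]
      ring
    simp_rw [h3] at h2
    rwa [mul_right_comm _ (Complex.exp (-(Complex.normSq w : ℂ))) (Complex.exp (-(w * u)))] at h2

lemma integral_one_dim (α β γ ε : ℕ) :
    ∫ v : ℂ, ∫ w : ℂ, v ^ α * (starRingEnd ℂ) v ^ β * w ^ γ * (starRingEnd ℂ) w ^ ε *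
        Complex.exp (-(w * (starRingEnd ℂ) v) - (Complex.normSq v : ℂ) -
          (Complex.normSq w : ℂ)) =
      if (β ≤ α ∧ γ ≤ ε) ∧ α - β = ε - γ then
        (Real.pi : ℂ) ^ 2 * ((-1) ^ (α - β) * ((α.factorial : ℂ) * (ε.factorial : ℂ)) /
          ((α - β).factorial : ℂ))
      else 0 := by
  have h1 : ∀ v w : ℂ, v ^ α * (starRingEnd ℂ) v ^ β * w ^ γ * (starRingEnd ℂ) w ^ ε *
        Complex.exp (-(w * (starRingEnd ℂ) v) - (Complex.normSq v : ℂ) -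
          (Complex.normSq w : ℂ)) =
      (v ^ α * (starRingEnd ℂ) v ^ β * Complex.exp (-(Complex.normSq v : ℂ))) *
      (w ^ γ * (starRingEnd ℂ) w ^ ε * Complex.exp (-(w * (starRingEnd ℂ) v)) *
        Complex.exp (-(Complex.normSq w : ℂ))) := by
    intro v w
    rw [sub_eq_add_neg, sub_eq_add_neg, Complex.exp_add, Complex.exp_add]
    ring
  simp_rw [h1, integral_const_mul, integral_mul_exp_linear]
  by_cases h : γ ≤ ε
  · simp only [h, if_true, and_true]
    have h2 : ∀ v : ℂ, (v ^ α * (starRingEnd ℂ) v ^ β * Complex.exp (-(Complex.normSq v : ℂ))) *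
        ((-(starRingEnd ℂ) v) ^ (ε - γ) / ((ε - γ).factorial : ℂ) *
          ((Real.pi : ℂ) * (ε.factorial : ℂ))) =
        ((-1) ^ (ε - γ) / ((ε - γ).factorial : ℂ) * ((Real.pi : ℂ) * (ε.factorial : ℂ))) *
        (v ^ α * (starRingEnd ℂ) v ^ (β + (ε - γ)) * Complex.exp (-(Complex.normSq v : ℂ))) := by
      intro v
      rw [neg_pow, pow_add]
      ring
    simp_rw [h2, integral_const_mul, gaussian_moment]
    by_cases h3 : α = β + (ε - γ)
    · have h4 : β ≤ α ∧ α - β = ε - γ := by lia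
      rw [if_pos h3, if_pos h4, h4.2]
      ring
    · rw [if_neg h3, if_neg (by lia), mul_zero]
  · simp [h]

theorem gaussian_double_integral_monomials (n : ℕ) (α β γ ε : Fin n → ℕ) :
    ((Real.pi ^ (2 * n))⁻¹ • ∫ v : Fin n → ℂ, ∫ w : Fin n → ℂ,
        (∏ j, v j ^ α j) * (∏ j, (starRingEnd ℂ) (v j) ^ β j) *
          (∏ j, w j ^ γ j) * (∏ j, (starRingEnd ℂ) (w j) ^ ε j) *
          Complex.exp (-(∑ j, w j * (starRingEnd ℂ) (v j)) -
            (cnormSq n v : ℂ) - (cnormSq n w : ℂ))) =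
      if ∀ j, β j ≤ α j ∧ γ j ≤ ε j then
        (if ∀ j, α j - β j = ε j - γ j then
          (-1 : ℂ) ^ (∑ j, (α j - β j)) *
            ((mfact n α : ℂ) * (mfact n ε : ℂ)) /
              ((∏ j, (α j - β j).factorial : ℕ) : ℂ)
        else 0)
      else 0 := by
  have h1 : ∀ v w : Fin n → ℂ,
      (∏ j, v j ^ α j) * (∏ j, (starRingEnd ℂ) (v j) ^ β j) *
          (∏ j, w j ^ γ j) * (∏ j, (starRingEnd ℂ) (w j) ^ ε j) *
          Complex.exp (-(∑ j, w j * (starRingEnd ℂ) (v j)) -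
            (cnormSq n v : ℂ) - (cnormSq n w : ℂ)) =
      ∏ j, (v j ^ α j * (starRingEnd ℂ) (v j) ^ β j * w j ^ γ j * (starRingEnd ℂ) (w j) ^ ε j *
        Complex.exp (-(w j * (starRingEnd ℂ) (v j)) - (Complex.normSq (v j) : ℂ) -
          (Complex.normSq (w j) : ℂ))) := by
    intro v w
    simp only [Finset.prod_mul_distrib, ← Complex.exp_sum, Finset.sum_sub_distrib,
      Finset.sum_neg_distrib, cnormSq, Complex.ofReal_sum]
  have h2 : ∀ v : Fin n → ℂ, ∫ w : Fin n → ℂ,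
      ∏ j, (v j ^ α j * (starRingEnd ℂ) (v j) ^ β j * w j ^ γ j * (starRingEnd ℂ) (w j) ^ ε j *
        Complex.exp (-(w j * (starRingEnd ℂ) (v j)) - (Complex.normSq (v j) : ℂ) -
          (Complex.normSq (w j) : ℂ))) =
      ∏ j, ∫ w : ℂ, v j ^ α j * (starRingEnd ℂ) (v j) ^ β j * w ^ γ j *
        (starRingEnd ℂ) w ^ ε j *
        Complex.exp (-(w * (starRingEnd ℂ) (v j)) - (Complex.normSq (v j) : ℂ) -
          (Complex.normSq w : ℂ)) := fun v =>
    integral_fintype_prod_volume_eq_prod (fun j (w : ℂ) =>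
      v j ^ α j * (starRingEnd ℂ) (v j) ^ β j * w ^ γ j * (starRingEnd ℂ) w ^ ε j *
        Complex.exp (-(w * (starRingEnd ℂ) (v j)) - (Complex.normSq (v j) : ℂ) -
          (Complex.normSq w : ℂ)))
  simp_rw [h1, h2]
  rw [integral_fintype_prod_volume_eq_prod (fun j (v : ℂ) => ∫ w : ℂ,
      v ^ α j * (starRingEnd ℂ) v ^ β j * w ^ γ j * (starRingEnd ℂ) w ^ ε j *
        Complex.exp (-(w * (starRingEnd ℂ) v) - (Complex.normSq v : ℂ) -
          (Complex.normSq w : ℂ)))]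
  simp_rw [integral_one_dim]
  rw [← ite_and]
  split_ifs with h <;> rw [← forall_and] at h
  · rw [Finset.prod_congr rfl fun j _ => if_pos (h j)]
    have hpi : (Real.pi : ℂ) ≠ 0 := Complex.ofReal_ne_zero.mpr Real.pi_ne_zero
    rw [Finset.prod_mul_distrib, Finset.prod_const, Finset.card_univ, Fintype.card_fin,
      Finset.prod_div_distrib, Finset.prod_mul_distrib, Finset.prod_mul_distrib,
      Finset.prod_pow_eq_pow_sum, Complex.real_smul, mfact, mfact, ← pow_mul]
    push_cast
    rw [inv_mul_cancel_left₀ (pow_ne_zero _ hpi)]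
  · obtain ⟨j, hj⟩ := not_forall.mp h
    rw [Finset.prod_eq_zero (Finset.mem_univ j) (if_neg hj), smul_zero]
end
end

section
/- Let α, β ∈ ℕ_0^n be multi-indices and t > 0. Then the heat transform of the polynomial p(w) = w^α \bar{w}^β is given exactly by the finite sum p^{(t)}(z) = Σ_{γ ∈ ℕ_0^n, γ ≤ α and γ ≤ β} (t^{|γ|}/γ!) (α!/(α−γ)!) (β!/(β−γ)!) z^{α−γ} \bar{z}^{β−γ} = Σ_{γ} (t^{|γ|}/γ!) ∂^γ ∂̄^γ (z^α \bar{z}^β) for all z ∈ ℂ^n. -/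
/-!
In the integral defining the heat transform, both the Gaussian weight and the monomial are products
of functions of one coordinate `wⱼ`, so the integral over `ℂⁿ` is a product of integrals over `ℂ`.
In one variable, `(√t w + z)^a` and its conjugate counterpart are expanded by the binomial theorem,
and only the diagonal terms survive by the orthogonality relation
`∫ w^k w̄^l e^{-|w|²} = π k!` if `k = l` and `0` otherwise (`integral_monomial_gaussian`). The
diagonal value is a Gamma integral, and the off-diagonal vanishing follows from rotation invariance.
This yields `heat_monomial_one`; multiplying out the product of the one-variable sums gives
`heat_monomial`.

The second formula reduces to the first by computing `∂^γ ∂̄^γ (z^α z̄^β)`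
(`wD_wDbar_monomial`): on a product of functions of one coordinate each Wirtinger derivative acts on
a single factor, and on `z^a z̄^b` its iterates produce falling factorials.
-/

open MeasureTheory Filter Topology

noncomputable section

/-- The (finite) set of all multi-indices `γ` with `γ ≤ α` and `γ ≤ β` componentwise. -/
def mIdxBelow (n : ℕ) (α β : Fin n → ℕ) : Finset (Fin n → ℕ) :=
  Fintype.piFinset fun j => Finset.range (min (α j) (β j) + 1)

/-! ### Wirtinger derivatives of products and monomials -/

/-- The one-variable operator `f ↦ (∂f/∂x + s ∂f/∂y) / 2`; it is the Wirtinger derivative `∂` for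
`s = -i` and `∂̄` for `s = i`. -/
def wirtinger (s : ℂ) (f : ℂ → ℂ) (z : ℂ) : ℂ :=
  (lineDeriv ℝ f z 1 + s * lineDeriv ℝ f z Complex.I) / 2

lemma lineDeriv_prod_single {n : ℕ} (j : Fin n) (g : Fin n → ℂ → ℂ) (w : Fin n → ℂ) (v : ℂ) :
    lineDeriv ℝ (fun w : Fin n → ℂ => ∏ i, g i (w i)) w (Pi.single j v) =
      lineDeriv ℝ (g j) (w j) v * ∏ i ∈ Finset.univ.erase j, g i (w i) := by
  unfold lineDeriv
  rw [← deriv_mul_const_field]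
  congr 1
  funext x
  beta_reduce
  rw [← Finset.mul_prod_erase _ _ (Finset.mem_univ j)]
  congr 1
  · simp
  · refine Finset.prod_congr rfl fun i hi => ?_
    simp [Pi.single_eq_of_ne (Finset.ne_of_mem_erase hi)]

lemma prod_update_apply {n : ℕ} (j : Fin n) (g : Fin n → ℂ → ℂ) (f : ℂ → ℂ) (w : Fin n → ℂ) :
    ∏ i, Function.update g j f i (w i) = f (w j) * ∏ i ∈ Finset.univ.erase j, g i (w i) := by
  rw [← Finset.mul_prod_erase _ _ (Finset.mem_univ j)]
  congr 1
  · simp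
  · refine Finset.prod_congr rfl fun i hi => ?_
    simp [Function.update_of_ne (Finset.ne_of_mem_erase hi)]

lemma wDz_prod {n : ℕ} (j : Fin n) (g : Fin n → ℂ → ℂ) :
    wDz n j (fun w => ∏ i, g i (w i)) =
      fun w => ∏ i, Function.update g j (wirtinger (-Complex.I) (g j)) i (w i) := by
  funext w
  rw [prod_update_apply, wDz, lineDeriv_prod_single, lineDeriv_prod_single, wirtinger]
  ring

lemma wDzbar_prod {n : ℕ} (j : Fin n) (g : Fin n → ℂ → ℂ) :
    wDzbar n j (fun w => ∏ i, g i (w i)) =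
      fun w => ∏ i, Function.update g j (wirtinger Complex.I (g j)) i (w i) := by
  funext w
  rw [prod_update_apply, wDzbar, lineDeriv_prod_single, lineDeriv_prod_single, wirtinger]
  ring

/-- If each `T j` acts on products `∏ᵢ gᵢ(wᵢ)` as the one-variable operator `D` on the `j`-th
factor, then the composition of the iterates `(T j)^[γ j]` acts as `D^[γ j]` on each factor. -/
lemma foldr_iterate_prod {n : ℕ} (T : Fin n → ((Fin n → ℂ) → ℂ) → (Fin n → ℂ) → ℂ)
    (D : (ℂ → ℂ) → ℂ → ℂ)
    (hT : ∀ j (g : Fin n → ℂ → ℂ), T j (fun w => ∏ i, g i (w i)) =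
      fun w => ∏ i, Function.update g j (D (g j)) i (w i))
    (γ : Fin n → ℕ) (g : Fin n → ℂ → ℂ) :
    (List.ofFn fun j => (T j)^[γ j]).foldr (· ∘ ·) id (fun w => ∏ i, g i (w i)) =
      fun w => ∏ i, (D^[γ i] (g i)) (w i) := by
  have hiter : ∀ (k : ℕ) (j : Fin n) (g : Fin n → ℂ → ℂ),
      (T j)^[k] (fun w => ∏ i, g i (w i)) =
        fun w => ∏ i, Function.update g j (D^[k] (g j)) i (w i) := by
    intro k j g
    induction k with
    | zero => simp
    | succ k ih =>
      rw [Function.iterate_succ_apply', ih, hT, Function.update_self, Function.update_idem,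
        ← Function.iterate_succ_apply' D]
  have hlist : ∀ L : List (Fin n), L.Nodup →
      (L.map fun j => (T j)^[γ j]).foldr (· ∘ ·) id (fun w => ∏ i, g i (w i)) =
        fun w => ∏ i, (if i ∈ L then D^[γ i] (g i) else g i) (w i) := by
    intro L hL
    induction L with
    | nil => simp
    | cons a L ih =>
      rw [List.nodup_cons] at hL
      rw [List.map_cons, List.foldr_cons, Function.comp_apply, ih hL.2,
        hiter _ _ (fun i => if i ∈ L then D^[γ i] (g i) else g i)]
      funext w
      refine Finset.prod_congr rfl fun i _ => ?_
      by_cases hi : i = a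
      · subst hi
        simp [hL.1]
      · simp [hi]
  rw [List.ofFn_eq_map, hlist _ (List.nodup_finRange n)]
  simp

lemma lineDeriv_monomial (c : ℂ) (a b : ℕ) (z v : ℂ) :
    lineDeriv ℝ (fun w : ℂ => c * w ^ a * (starRingEnd ℂ) w ^ b) z v =
      c * (a * z ^ (a - 1) * v * (starRingEnd ℂ) z ^ b +
        z ^ a * (b * (starRingEnd ℂ) z ^ (b - 1) * (starRingEnd ℂ) v)) := by
  have h1 : HasDerivAt (fun x : ℝ => z + x • v) v 0 := by
    simpa using ((hasDerivAt_id (0 : ℝ)).smul_const v).const_add z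
  have h2 : HasDerivAt (fun x : ℝ => (starRingEnd ℂ) (z + x • v)) ((starRingEnd ℂ) v) 0 := by
    simpa using ((hasDerivAt_id (0 : ℝ)).smul_const ((starRingEnd ℂ) v)).const_add
      ((starRingEnd ℂ) z)
  have h := (((h1.pow a).const_mul c).mul (h2.pow b)).deriv
  unfold lineDeriv
  refine Eq.trans h ?_
  simp
  ring

lemma wirtinger_monomial (c : ℂ) (a b : ℕ) :
    wirtinger (-Complex.I) (fun w : ℂ => c * w ^ a * (starRingEnd ℂ) w ^ b) =
      fun w => (c * a) * w ^ (a - 1) * (starRingEnd ℂ) w ^ b := by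
  funext z
  rw [wirtinger, lineDeriv_monomial, lineDeriv_monomial, map_one, Complex.conj_I]
  linear_combination (c * (a * z ^ (a - 1) * (starRingEnd ℂ) z ^ b -
        z ^ a * (b * (starRingEnd ℂ) z ^ (b - 1)))) * (-1 / 2) * Complex.I_sq

lemma wirtinger_bar_monomial (c : ℂ) (a b : ℕ) :
    wirtinger Complex.I (fun w : ℂ => c * w ^ a * (starRingEnd ℂ) w ^ b) =
      fun w => (c * b) * w ^ a * (starRingEnd ℂ) w ^ (b - 1) := by
  funext z
  rw [wirtinger, lineDeriv_monomial, lineDeriv_monomial, map_one, Complex.conj_I]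
  linear_combination (c * (a * z ^ (a - 1) * (starRingEnd ℂ) z ^ b -
        z ^ a * (b * (starRingEnd ℂ) z ^ (b - 1)))) * (1 / 2) * Complex.I_sq

lemma wirtinger_iterate_monomial (c : ℂ) (a b k : ℕ) :
    (wirtinger (-Complex.I))^[k] (fun w : ℂ => c * w ^ a * (starRingEnd ℂ) w ^ b) =
      fun w => (c * a.descFactorial k) * w ^ (a - k) * (starRingEnd ℂ) w ^ b := by
  induction k with
  | zero => simp
  | succ k ih =>
    rw [Function.iterate_succ_apply', ih, wirtinger_monomial, Nat.descFactorial_succ]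
    funext w
    push_cast
    rw [Nat.sub_sub]
    ring

lemma wirtinger_bar_iterate_monomial (c : ℂ) (a b k : ℕ) :
    (wirtinger Complex.I)^[k] (fun w : ℂ => c * w ^ a * (starRingEnd ℂ) w ^ b) =
      fun w => (c * b.descFactorial k) * w ^ a * (starRingEnd ℂ) w ^ (b - k) := by
  induction k with
  | zero => simp
  | succ k ih =>
    rw [Function.iterate_succ_apply', ih, wirtinger_bar_monomial, Nat.descFactorial_succ]
    funext w
    push_cast
    rw [Nat.sub_sub]
    ring

lemma wD_wDbar_monomial {n : ℕ} (α β γ : Fin n → ℕ) (z : Fin n → ℂ) :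
    wD n γ (wDbar n γ (fun w => (∏ j, w j ^ α j) * ∏ j, (starRingEnd ℂ) (w j) ^ β j)) z =
      ∏ j, (((α j).descFactorial (γ j) : ℂ) * ((β j).descFactorial (γ j) : ℂ) *
        z j ^ (α j - γ j) * (starRingEnd ℂ) (z j) ^ (β j - γ j)) := by
  have h0 : (fun w : Fin n → ℂ => (∏ j, w j ^ α j) * ∏ j, (starRingEnd ℂ) (w j) ^ β j) =
      fun w => ∏ j, (fun x : ℂ => 1 * x ^ α j * (starRingEnd ℂ) x ^ β j) (w j) := by
    funext w
    simp [Finset.prod_mul_distrib]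
  rw [h0, wDbar, foldr_iterate_prod _ _ wDzbar_prod γ
    (fun j (x : ℂ) => 1 * x ^ α j * (starRingEnd ℂ) x ^ β j), wD]
  simp only [wirtinger_bar_iterate_monomial]
  rw [foldr_iterate_prod _ _ wDz_prod γ
    (fun j (x : ℂ) => 1 * ((β j).descFactorial (γ j) : ℂ) * x ^ α j *
      (starRingEnd ℂ) x ^ (β j - γ j))]
  simp only [wirtinger_iterate_monomial]
  refine Finset.prod_congr rfl fun j _ => ?_
  ring

/-! ### Gaussian moments on `ℂ` -/

lemma integral_norm_pow_mul_gaussian (q : ℕ) :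
    ∫ w : ℂ, ‖w‖ ^ (q : ℝ) * Real.exp (-‖w‖ ^ (2 : ℝ)) =
      Real.pi * Real.Gamma ((q + 2) / 2) := by
  rw [Complex.integral_rpow_mul_exp_neg_rpow (by norm_num)
    (by have : (0 : ℝ) ≤ q := q.cast_nonneg
        linarith)]
  ring

lemma integrable_monomial_gaussian (k l : ℕ) :
    Integrable fun w : ℂ => Real.exp (-Complex.normSq w) • (w ^ k * (starRingEnd ℂ) w ^ l) := by
  -- The integral of the norm has a nonzero value, so the norm cannot be non-integrable.
  have h : Integrable fun w : ℂ => ‖w‖ ^ ((k + l : ℕ) : ℝ) * Real.exp (-‖w‖ ^ (2 : ℝ)) := by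
    by_contra hn
    have h1 := integral_undef hn
    rw [integral_norm_pow_mul_gaussian] at h1
    have : 0 < Real.pi * Real.Gamma ((((k + l : ℕ) : ℝ) + 2) / 2) :=
      mul_pos Real.pi_pos (Real.Gamma_pos_of_pos (by positivity))
    exact this.ne' h1
  refine h.mono' ?_ (ae_of_all _ fun w => le_of_eq ?_)
  · refine Continuous.aestronglyMeasurable ?_
    have := Complex.continuous_normSq
    have := Complex.continuous_conj
    fun_prop
  · rw [norm_smul, norm_mul, norm_pow, norm_pow, RCLike.norm_conj, Real.norm_eq_abs, Real.abs_exp,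
      Complex.normSq_eq_norm_sq, Real.rpow_natCast, Real.rpow_two]
    ring

/-- Orthogonality of the monomials in the Gaussian `L²` space of `ℂ`. -/
lemma integral_monomial_gaussian (k l : ℕ) :
    ∫ w : ℂ, Real.exp (-Complex.normSq w) • (w ^ k * (starRingEnd ℂ) w ^ l) =
      if k = l then (Real.pi : ℂ) * k.factorial else 0 := by
  split_ifs with hkl
  · subst hkl
    have h := integral_norm_pow_mul_gaussian (2 * k)
    have hG : ((((2 * k : ℕ) : ℝ) + 2) / 2) = (k : ℝ) + 1 := by push_cast; ring
    rw [hG, Real.Gamma_nat_eq_factorial] at h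
    have h2 : ∀ w : ℂ, Real.exp (-Complex.normSq w) • (w ^ k * (starRingEnd ℂ) w ^ k) =
        ((‖w‖ ^ ((2 * k : ℕ) : ℝ) * Real.exp (-‖w‖ ^ (2 : ℝ)) : ℝ) : ℂ) := by
      intro w
      rw [← mul_pow, Complex.mul_conj, Complex.normSq_eq_norm_sq, Real.rpow_natCast, Real.rpow_two,
        Complex.real_smul]
      push_cast
      ring
    simp_rw [h2]
    rw [integral_complex_ofReal, h]
    push_cast
    ring
  · -- Rotation by `θ = π / (k - l)` preserves the Gaussian measure and multiplies the integrand
    -- by `exp (i (k - l) θ) = -1`.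
    set I₀ := ∫ w : ℂ, Real.exp (-Complex.normSq w) • (w ^ k * (starRingEnd ℂ) w ^ l) with hI
    set θ : ℝ := Real.pi / ((k : ℝ) - l) with hθ
    have hne : (k : ℝ) - l ≠ 0 := sub_ne_zero.mpr (by exact_mod_cast hkl)
    have hc : Complex.exp (θ * Complex.I) ^ k *
        (starRingEnd ℂ) (Complex.exp (θ * Complex.I)) ^ l = -1 := by
      rw [← Complex.exp_conj, map_mul, Complex.conj_ofReal, Complex.conj_I, ← Complex.exp_nat_mul,
        ← Complex.exp_nat_mul, ← Complex.exp_add, ← Complex.exp_pi_mul_I]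
      congr 1
      have : (Real.pi : ℂ) = ((k : ℂ) - l) * θ := by
        have h3 : Real.pi = ((k : ℝ) - l) * θ := by rw [hθ]; field_simp
        exact_mod_cast congrArg (fun x : ℝ => (x : ℂ)) h3
      rw [this]
      ring
    have hrot := (rotation (Circle.exp θ)).measurePreserving.integral_comp
      (rotation (Circle.exp θ)).toHomeomorph.measurableEmbedding
      (fun w : ℂ => Real.exp (-Complex.normSq w) • (w ^ k * (starRingEnd ℂ) w ^ l))
    have h4 : ∀ w : ℂ, Real.exp (-Complex.normSq (rotation (Circle.exp θ) w)) •
        ((rotation (Circle.exp θ) w) ^ k * (starRingEnd ℂ) (rotation (Circle.exp θ) w) ^ l) =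
        -(Real.exp (-Complex.normSq w) • (w ^ k * (starRingEnd ℂ) w ^ l)) := by
      intro w
      rw [Complex.normSq_eq_norm_sq, LinearIsometryEquiv.norm_map, ← Complex.normSq_eq_norm_sq,
        rotation_apply, Circle.coe_exp, map_mul, mul_pow, mul_pow, ← smul_neg]
      congr 1
      linear_combination (w ^ k * (starRingEnd ℂ) w ^ l) * hc
    simp_rw [h4] at hrot
    rw [integral_neg, ← hI] at hrot
    exact self_eq_neg.mp hrot.symm

/-! ### Heat transform of monomials -/

/-- The heat transform formula in one variable. -/
lemma heat_monomial_one (a b : ℕ) (t : ℝ) (ht : 0 < t) (z : ℂ) :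
    ∫ w : ℂ, Real.exp (-Complex.normSq w) •
        ((Real.sqrt t • w + z) ^ a * (starRingEnd ℂ) (Real.sqrt t • w + z) ^ b) =
      (Real.pi : ℂ) * ∑ k ∈ Finset.range (min a b + 1), (t : ℂ) ^ k / (k.factorial : ℂ) *
        ((a.descFactorial k : ℂ) * (b.descFactorial k : ℂ) *
        z ^ (a - k) * (starRingEnd ℂ) z ^ (b - k)) := by
  have hexp : ∀ w : ℂ, Real.exp (-Complex.normSq w) •
        ((Real.sqrt t • w + z) ^ a * (starRingEnd ℂ) (Real.sqrt t • w + z) ^ b) =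
      ∑ k ∈ Finset.range (a + 1), ∑ l ∈ Finset.range (b + 1),
        ((Real.sqrt t : ℂ) ^ k * z ^ (a - k) * a.choose k *
          ((Real.sqrt t : ℂ) ^ l * (starRingEnd ℂ) z ^ (b - l) * b.choose l)) *
          (Real.exp (-Complex.normSq w) • (w ^ k * (starRingEnd ℂ) w ^ l)) := by
    intro w
    rw [map_add, Complex.real_smul (x := √t), map_mul, Complex.conj_ofReal, add_pow, add_pow,
      Finset.sum_mul_sum, Finset.smul_sum]
    refine Finset.sum_congr rfl fun k _ => ?_
    rw [Finset.smul_sum]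
    refine Finset.sum_congr rfl fun l _ => ?_
    simp only [Complex.real_smul]
    ring
  simp_rw [hexp]
  rw [integral_finsetSum _ fun k _ => integrable_finsetSum _ fun l _ =>
    (integrable_monomial_gaussian k l).const_mul _]
  simp_rw [integral_finsetSum _ fun l _ => (integrable_monomial_gaussian _ l).const_mul _,
    integral_const_mul, integral_monomial_gaussian, mul_ite, mul_zero, Finset.sum_ite_eq,
    Finset.mem_range]
  rw [← Finset.sum_filter, Finset.mul_sum]
  have hset : (Finset.range (a + 1)).filter (fun k => k < b + 1) =
      Finset.range (min a b + 1) := by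
    ext k
    simp only [Finset.mem_filter, Finset.mem_range]
    omega
  rw [hset]
  refine Finset.sum_congr rfl fun k _ => ?_
  have hk : (k.factorial : ℂ) ≠ 0 := by exact_mod_cast k.factorial_ne_zero
  have hs : (t : ℂ) ^ k = (Real.sqrt t : ℂ) ^ k * (Real.sqrt t : ℂ) ^ k := by
    rw [← mul_pow, ← Complex.ofReal_mul, Real.mul_self_sqrt ht.le]
  rw [hs, Nat.descFactorial_eq_factorial_mul_choose, Nat.descFactorial_eq_factorial_mul_choose]
  push_cast
  field_simp

lemma heat_monomial (n : ℕ) (α β : Fin n → ℕ) (t : ℝ) (ht : 0 < t) (z : Fin n → ℂ) :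
    heat n t (fun w => (∏ j, w j ^ α j) * ∏ j, (starRingEnd ℂ) (w j) ^ β j) z =
      ∑ γ ∈ mIdxBelow n α β, ∏ j, ((t : ℂ) ^ γ j / ((γ j).factorial : ℂ) *
        (((α j).descFactorial (γ j) : ℂ) * ((β j).descFactorial (γ j) : ℂ) *
        z j ^ (α j - γ j) * (starRingEnd ℂ) (z j) ^ (β j - γ j))) := by
  have h0 : ∀ w : Fin n → ℂ, Real.exp (-(cnormSq n w)) •
      ((∏ j, (Real.sqrt t • w + z) j ^ α j) *
        ∏ j, (starRingEnd ℂ) ((Real.sqrt t • w + z) j) ^ β j) =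
      ∏ j, (fun x : ℂ => Real.exp (-Complex.normSq x) •
        ((Real.sqrt t • x + z j) ^ α j * (starRingEnd ℂ) (Real.sqrt t • x + z j) ^ β j)) (w j) := by
    intro w
    simp only [cnormSq, Complex.real_smul, Finset.prod_mul_distrib, ← Finset.sum_neg_distrib,
      Real.exp_sum, Complex.ofReal_prod, Pi.add_apply, Pi.smul_apply]
  rw [heat, integral_congr_ae (ae_of_all _ h0), integral_fintype_prod_volume_eq_prod
    (fun j (x : ℂ) => Real.exp (-Complex.normSq x) •
      ((Real.sqrt t • x + z j) ^ α j * (starRingEnd ℂ) (Real.sqrt t • x + z j) ^ β j))]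
  simp_rw [heat_monomial_one _ _ t ht]
  rw [Finset.prod_mul_distrib, Finset.prod_univ_sum, Finset.prod_const, Finset.card_univ,
    Fintype.card_fin, Complex.real_smul, ← mul_assoc, mIdxBelow]
  have hpi : (Real.pi : ℂ) ≠ 0 := by exact_mod_cast Real.pi_ne_zero
  push_cast
  rw [inv_mul_cancel₀ (pow_ne_zero _ hpi), one_mul]

theorem heat_transform_of_monomial (n : ℕ) (α β : Fin n → ℕ) (t : ℝ) (ht : 0 < t)
    (z : Fin n → ℂ) :
    heat n t (fun w => (∏ j, w j ^ α j) * ∏ j, (starRingEnd ℂ) (w j) ^ β j) z =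
        ∑ γ ∈ mIdxBelow n α β,
          (((t : ℂ) ^ msum n γ) / (mfact n γ : ℂ)) *
            ((mfact n α : ℂ) / ((∏ j, (α j - γ j).factorial : ℕ) : ℂ)) *
            ((mfact n β : ℂ) / ((∏ j, (β j - γ j).factorial : ℕ) : ℂ)) *
            (∏ j, z j ^ (α j - γ j)) * (∏ j, (starRingEnd ℂ) (z j) ^ (β j - γ j)) ∧
      heat n t (fun w => (∏ j, w j ^ α j) * ∏ j, (starRingEnd ℂ) (w j) ^ β j) z =
        ∑ γ ∈ mIdxBelow n α β,
          (((t : ℂ) ^ msum n γ) / (mfact n γ : ℂ)) *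
            wD n γ (wDbar n γ (fun w => (∏ j, w j ^ α j) * ∏ j, (starRingEnd ℂ) (w j) ^ β j)) z := by
  rw [heat_monomial n α β t ht z]
  refine ⟨Finset.sum_congr rfl fun γ hγ => ?_, Finset.sum_congr rfl fun γ _ => ?_⟩
  · have hle : ∀ j, γ j ≤ α j ∧ γ j ≤ β j := by
      intro j
      have h := Fintype.mem_piFinset.mp hγ j
      rw [Finset.mem_range] at h
      omega
    have hdesc : ∀ m k : ℕ, k ≤ m →
        (m.descFactorial k : ℂ) = (m.factorial : ℂ) / ((m - k).factorial : ℂ) := by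
      intro m k hkm
      rw [eq_div_iff (by exact_mod_cast (m - k).factorial_ne_zero), mul_comm]
      exact_mod_cast Nat.factorial_mul_descFactorial hkm
    rw [msum, mfact, mfact, mfact, ← Finset.prod_pow_eq_pow_sum]
    push_cast
    simp only [← Finset.prod_div_distrib, ← Finset.prod_mul_distrib]
    refine Finset.prod_congr rfl fun j _ => ?_
    rw [hdesc _ _ (hle j).1, hdesc _ _ (hle j).2]
    ring
  · rw [wD_wDbar_monomial, msum, mfact, ← Finset.prod_pow_eq_pow_sum]
    push_cast
    simp only [← Finset.prod_div_distrib, ← Finset.prod_mul_distrib]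
end
end
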